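/- arXiv:1011.4884 — 2 statements merged into one kernel-verified Lean document; each statement's English description precedes it below -/
import Mathlib

section
/- (Curve Selection Lemma at infinity.) Let U ⊆ ℝⁿ be a semialgebraic set and g : ℝⁿ → ℝ a polynomial function. Suppose there is a sequence (x_k) in U with ‖x_k‖ → ∞ and g(x_k) → c, where c is an element of the extended reals [-∞, +∞]. Then there exist an integer α < 0, a real ε > 0, and a real-analytic map y : (-ε, ε) → ℝⁿ with y(0) ≠ 0 such that the path x(t) := t^α · y(t) satisfies x(t) ∈ U for all t ∈ (0, ε) and g(x(t)) → c (in the extended reals) as t → 0⁺. -/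
open Complex Filter Finset

noncomputable section

abbrev MixedCoeff (n : ℕ) := ((Fin n → ℕ) × (Fin n → ℕ)) →₀ ℂ

namespace Mixed

variable {n : ℕ}

/-- Evaluation of a mixed polynomial given by its coefficient function `c`:
`f(z) = Σ c(ν,μ) zᵛ z̄ᵘ`. -/
def eval (c : MixedCoeff n) (z : Fin n → ℂ) : ℂ :=
  c.sum fun p a => a * (∏ i, z i ^ p.1 i) * ∏ i, (starRingEnd ℂ) (z i) ^ p.2 i

/-- `∂f/∂z_i` evaluated at `(z, z̄)`. -/
def dz (c : MixedCoeff n) (i : Fin n) (z : Fin n → ℂ) : ℂ :=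
  c.sum fun p a => a * (p.1 i) * (∏ j, z j ^ (p.1 j - if j = i then 1 else 0)) *
    ∏ j, (starRingEnd ℂ) (z j) ^ p.2 j

/-- `∂f/∂z̄_i` evaluated at `(z, z̄)`. -/
def dzbar (c : MixedCoeff n) (i : Fin n) (z : Fin n → ℂ) : ℂ :=
  c.sum fun p a => a * (p.2 i) * (∏ j, z j ^ p.1 j) *
    ∏ j, (starRingEnd ℂ) (z j) ^ (p.2 j - if j = i then 1 else 0)

/-- The singular locus of `f` as a real map `ℝ²ⁿ → ℝ²`. -/
def Sing (c : MixedCoeff n) : Set (Fin n → ℂ) :=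
  {z | ¬ Function.Surjective ⇑(fderiv ℝ (eval c) z)}

/-- The Milnor set `M(f)`. -/
def Milnor (c : MixedCoeff n) : Set (Fin n → ℂ) :=
  {z | ∃ (l : ℝ) (m : ℂ), m ≠ 0 ∧
    ∀ i, (l : ℂ) * z i = m * (starRingEnd ℂ) (dz c i z) + (starRingEnd ℂ) m * dzbar c i z}

/-- The set `S(f)` of asymptotic ρ-nonregular values. -/
def Sset (c : MixedCoeff n) : Set ℂ :=
  {v | ∃ zk : ℕ → (Fin n → ℂ), (∀ k, zk k ∈ Milnor c) ∧
    Tendsto (fun k => ‖zk k‖) atTop atTop ∧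
    Tendsto (fun k => eval c (zk k)) atTop (nhds v)}

/-- The point of `ℝⁿ` attached to the exponent pair `(ν,μ)`, namely `ν+μ`. -/
def suppPt (p : (Fin n → ℕ) × (Fin n → ℕ)) : Fin n → ℝ := fun i => ((p.1 i + p.2 i : ℕ) : ℝ)

/-- The support of `f`, as a subset of `ℝⁿ`. -/
def suppPts (c : MixedCoeff n) : Set (Fin n → ℝ) := suppPt '' (c.support : Set _)

/-- The Newton polyhedron `Γ₀(f)`: convex hull of `{0} ∪ supp(f)`. -/
def Gamma0 (c : MixedCoeff n) : Set (Fin n → ℝ) := convexHull ℝ (insert 0 (suppPts c))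

/-- `supp(f)‾`: the convex hull of `supp(f) \ {0}`. -/
def suppBar (c : MixedCoeff n) : Set (Fin n → ℝ) := convexHull ℝ (suppPts c \ {0})

/-- `F` is a face of the (compact convex) set `C`: either `C` itself or the set of
minimizers on `C` of a linear functional, and nonempty. -/
def IsFaceOf (C F : Set (Fin n → ℝ)) : Prop :=
  F.Nonempty ∧ (F = C ∨ ∃ a : Fin n → ℝ,
    F = {x ∈ C | ∀ y ∈ C, ∑ i, a i * x i ≤ ∑ i, a i * y i})

/-- `Δ` is a face of the Newton boundary at infinity `Γ⁺(f)`: a face of `Γ₀(f)` not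
containing the origin. -/
def IsGammaPlusFace (c : MixedCoeff n) (Δ : Set (Fin n → ℝ)) : Prop :=
  IsFaceOf (Gamma0 c) Δ ∧ (0 : Fin n → ℝ) ∉ Δ

/-- `Γ⁺(f)` as a subset of `ℝⁿ`: the union of the faces of `Γ₀(f)` not containing `0`. -/
def GammaPlusSet (c : MixedCoeff n) : Set (Fin n → ℝ) :=
  {x | ∃ Δ, IsGammaPlusFace c Δ ∧ x ∈ Δ}

/-- The truncation `f_Δ` of `f` to a subset `Δ ⊆ ℝⁿ`. -/
def trunc (c : MixedCoeff n) (Δ : Set (Fin n → ℝ)) : MixedCoeff n :=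
  @Finsupp.filter _ _ _ (fun p => suppPt p ∈ Δ) (Classical.decPred _) c

/-- Newton non-degeneracy: for every face `Δ` of `Γ⁺(f)`,
`Sing f_Δ ∩ f_Δ⁻¹(0) ∩ (ℂ*)ⁿ = ∅`. -/
def NewtonNonDeg (c : MixedCoeff n) : Prop :=
  ∀ Δ, IsGammaPlusFace c Δ → ∀ z : Fin n → ℂ, (∀ i, z i ≠ 0) →
    eval (trunc c Δ) z = 0 → z ∉ Sing (trunc c Δ)

/-- Newton strong non-degeneracy: for every face `Δ` of `Γ⁺(f)`,
`Sing f_Δ ∩ (ℂ*)ⁿ = ∅`. -/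
def NewtonStronglyNonDeg (c : MixedCoeff n) : Prop :=
  ∀ Δ, IsGammaPlusFace c Δ → ∀ z : Fin n → ℂ, (∀ i, z i ≠ 0) →
    z ∉ Sing (trunc c Δ)

/-- `Δ` is a bad face of `supp(f)‾`. -/
def IsBadFace (c : MixedCoeff n) (Δ : Set (Fin n → ℝ)) : Prop :=
  IsFaceOf (suppBar c) Δ ∧ (0 : Fin n → ℝ) ∈ affineSpan ℝ Δ ∧
    ∃ a : Fin n → ℝ, (∃ i, a i < 0) ∧ (∃ j, 0 < a j) ∧
      {x ∈ suppBar c | ∑ i, a i * x i = 0} = Δ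

/-- `f` depends effectively on all its variables. -/
def EffectiveAll (c : MixedCoeff n) : Prop :=
  ∀ i, ∃ p ∈ c.support, 0 < p.1 i + p.2 i

/-- The Euclidean norm on `ℂⁿ`. -/
def norm2 (v : Fin n → ℂ) : ℝ := Real.sqrt (∑ i, Complex.normSq (v i))

end Mixed

/-- A semialgebraic subset of `ℝⁿ`: a finite union of sets each defined by finitely many
polynomial equations and finitely many strict polynomial inequalities. -/
def IsSemialgebraic {n : ℕ} (U : Set (Fin n → ℝ)) : Prop :=
  ∃ (m : ℕ) (E Q : Fin m → Finset (MvPolynomial (Fin n) ℝ)),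
    U = ⋃ k : Fin m, {x | (∀ p ∈ E k, MvPolynomial.eval x p = 0) ∧
                          (∀ q ∈ Q k, 0 < MvPolynomial.eval x q)}

/-! The germs at `0⁺` of the convergent real Puiseux series `h (t ^ (1 / N))`, with `h` meromorphic,
form an ordered field in which polynomials have the intermediate value property. This is the
Newton–Puiseux theorem: translate a monic polynomial so that its next coefficient vanishes, and
scale its roots by a slope of the Newton polygon so that its coefficients are bounded and its
reduction at `t = 0` is not a power of `X`. If the reduction has a real root, it splits into coprime
factors, which lift by the analytic inverse function theorem; otherwise the polynomial is positive.

Two ordered fields with polynomial intermediate values satisfy the same sign conditions, provided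
that finitely many expressions in the coefficients have the same signs in both; this follows by
extending finite partial order isomorphisms, one coordinate of a point at a time, so that they match
the roots of all the polynomials involved. For coefficients in `ℝ[s]`, specialized to a real number
`s` on one side and to the germ of `s` on the other, the proviso holds as soon as `s > 0` is small.

Membership in `U`, closeness of `g` to `c` up to `s`, and `s‖x‖² > 1` are such sign conditions. Fix
a small `s`: a point `x k` with large `k` satisfies them, so some tuple of Puiseux series does too.
After the substitution `t = τ ^ N` it is a meromorphic curve in `U` with a pole at `0` along which
`g` tends to `c`; the order of the pole is `-α`.
-/

open Polynomial Topology

namespace CurveSelection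
section IntermediateValue

variable {R : Type*} [Field R]

theorem exists_eq_pow_succ_mul {p : R[X]} (hp : p ≠ 0) {a : R} (ha : p.eval a = 0) :
    ∃ (k : ℕ) (q : R[X]), p = (X - C a) ^ (k + 1) * q ∧ q.eval a ≠ 0 := by
  obtain ⟨q, hpq, hq⟩ := exists_eq_pow_rootMultiplicity_mul_and_not_dvd p hp a
  obtain ⟨k, hk⟩ := Nat.exists_eq_succ_of_ne_zero ((rootMultiplicity_pos hp).2 ha).ne'
  rw [hk] at hpq
  exact ⟨k, q, hpq, by rwa [dvd_iff_isRoot] at hq⟩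

theorem exists_eq_pow_succ_mul_pow_succ_mul {p : R[X]} (hp : p ≠ 0) {a b : R} (hab : a ≠ b)
    (ha : p.eval a = 0) (hb : p.eval b = 0) :
    ∃ (k l : ℕ) (q : R[X]), p = (X - C a) ^ (k + 1) * ((X - C b) ^ (l + 1) * q) ∧
      q.eval a ≠ 0 ∧ q.eval b ≠ 0 := by
  obtain ⟨k, r, rfl, hra⟩ := exists_eq_pow_succ_mul hp ha
  have hrb : r.eval b = 0 := by simpa [sub_eq_zero, hab.symm] using hb
  obtain ⟨l, q, rfl, hqb⟩ := exists_eq_pow_succ_mul (right_ne_zero_of_mul hp) hrb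
  exact ⟨k, l, q, rfl, fun h => hra (by simp [h]), hqb⟩

variable [LinearOrder R]

/-- The intermediate value property of a single polynomial. -/
def HasIVT (p : R[X]) : Prop :=
  ∀ ⦃a b : R⦄, a < b → p.eval a * p.eval b < 0 → ∃ c ∈ Set.Ioo a b, p.eval c = 0

variable (R) in
/-- The ordered fields over which every polynomial has the intermediate value property; these are
the real closed fields, in the form in which the proof uses them. -/
class PolynomialIVT : Prop where
  hasIVT (p : R[X]) : HasIVT p

instance : PolynomialIVT ℝ where
  hasIVT p a b hab hneg := by
    have hcont : ContinuousOn (fun x => p.eval x) (Set.Icc a b) := p.continuousOn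
    rcases mul_neg_iff.1 hneg with ⟨ha, hb⟩ | ⟨ha, hb⟩
    · exact intermediate_value_Ioo' hab.le hcont ⟨hb, ha⟩
    · exact intermediate_value_Ioo hab.le hcont ⟨ha, hb⟩

variable [IsStrictOrderedRing R]

theorem exists_derivative_eval_eq_zero_of_factor [PolynomialIVT R] (k l : ℕ) {q : R[X]} {a b : R}
    (hab : a < b) (hq : 0 < q.eval a * q.eval b) :
    ∃ c ∈ Set.Ioo a b,
      ((X - C a) ^ (k + 1) * ((X - C b) ^ (l + 1) * q)).derivative.eval c = 0 := by
  set q' : R[X] := C ((k : R) + 1) * (X - C b) * q + C ((l : R) + 1) * (X - C a) * q +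
    (X - C a) * (X - C b) * q.derivative with hq'
  have hderiv : ((X - C a) ^ (k + 1) * ((X - C b) ^ (l + 1) * q)).derivative =
      (X - C a) ^ k * (X - C b) ^ l * q' := by
    simp only [hq', derivative_mul, derivative_pow, derivative_sub, derivative_X, derivative_C,
      Nat.cast_add, Nat.cast_one, Nat.add_sub_cancel, map_add, map_natCast, map_one]
    ring
  have hneg : q'.eval a * q'.eval b < 0 := by
    have hpos : 0 < ((k : R) + 1) * ((l : R) + 1) * (b - a) ^ 2 * (q.eval a * q.eval b) := by
      have := sub_pos.2 hab
      positivity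
    calc q'.eval a * q'.eval b
        = -(((k : R) + 1) * ((l : R) + 1) * (b - a) ^ 2 * (q.eval a * q.eval b)) := by
          simp [hq']; ring
      _ < 0 := neg_neg_of_pos hpos
  obtain ⟨c, hc, hc0⟩ := PolynomialIVT.hasIVT q' hab hneg
  exact ⟨c, hc, by rw [hderiv, eval_mul, hc0, mul_zero]⟩

/-- Between two consecutive roots of `p`, the cofactor of the two roots has constant sign. -/
theorem exists_derivative_eval_eq_zero [PolynomialIVT R] {p : R[X]} {a b : R} (hab : a < b)
    (ha : p.eval a = 0) (hb : p.eval b = 0) : ∃ c ∈ Set.Ioo a b, p.derivative.eval c = 0 := by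
  rcases eq_or_ne p 0 with rfl | hp
  · obtain ⟨c, hc⟩ := exists_between hab
    exact ⟨c, hc, by simp⟩
  obtain ⟨b', hb', hmin⟩ := Finset.exists_min_image (p.roots.toFinset.filter (a < ·)) id
    ⟨b, by simp [hp, hab, hb]⟩
  simp only [Finset.mem_filter, Multiset.mem_toFinset, mem_roots hp, IsRoot.def, id] at hb' hmin
  obtain ⟨hb'0, hab'⟩ := hb'
  obtain ⟨k, l, q, hpq, hqa, hqb⟩ := exists_eq_pow_succ_mul_pow_succ_mul hp hab'.ne ha hb'0
  have hq : 0 < q.eval a * q.eval b' := by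
    by_contra! hle
    obtain ⟨c, hc, hc0⟩ := PolynomialIVT.hasIVT q hab' (hle.lt_of_ne (mul_ne_zero hqa hqb))
    exact (hmin c ⟨by simp [hpq, hc0], hc.1⟩).not_gt hc.2
  obtain ⟨c, hc, hc0⟩ := exists_derivative_eval_eq_zero_of_factor k l hab' hq
  exact ⟨c, ⟨hc.1, hc.2.trans_le (hmin b ⟨hb, hab⟩)⟩, by rwa [hpq]⟩

theorem exists_derivative_eval_mul_sub_eq [PolynomialIVT R] (p : R[X]) {a b : R} (hab : a < b) :
    ∃ c ∈ Set.Ioo a b, p.derivative.eval c * (b - a) = p.eval b - p.eval a := by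
  set m := (p.eval b - p.eval a) / (b - a)
  have hm_mul : m * (b - a) = p.eval b - p.eval a := div_mul_cancel₀ _ (sub_pos.2 hab).ne'
  obtain ⟨c, hc, hc0⟩ := exists_derivative_eval_eq_zero (p := p - C (p.eval a) - C m * (X - C a))
    hab (by simp) (by simp [hm_mul])
  have hcm : p.derivative.eval c = m := by simpa [sub_eq_zero] using hc0
  exact ⟨c, hc, by rw [hcm, hm_mul]⟩

theorem eval_lt_eval_of_derivative_pos [PolynomialIVT R] {p : R[X]} {a b : R} (hab : a < b)
    (hp : ∀ c ∈ Set.Ioo a b, 0 < p.derivative.eval c) : p.eval a < p.eval b := by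
  obtain ⟨c, hc, hc'⟩ := exists_derivative_eval_mul_sub_eq p hab
  exact sub_pos.1 (hc' ▸ mul_pos (hp c hc) (sub_pos.2 hab))

theorem tendsto_eval_atTop {p : R[X]} (hdeg : 0 < p.degree) (hp : 0 < p.leadingCoeff) :
    Tendsto (fun x => p.eval x) atTop atTop := by
  refine degree_pos_induction_on
    (P := fun p => 0 < p.leadingCoeff → Tendsto (fun x => p.eval x) atTop atTop) p hdeg
    (fun _ hp => ?_) (fun _ ih hp => ?_) (fun {q b} hq ih hp => ?_) hp
  · simp only [leadingCoeff_mul, leadingCoeff_C, leadingCoeff_X, mul_one] at hp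
    simpa using tendsto_id.const_mul_atTop hp
  · simp only [leadingCoeff_mul, leadingCoeff_X, mul_one] at hp
    simpa using (ih hp).atTop_mul_atTop₀ tendsto_id
  · rw [leadingCoeff_add_of_degree_lt' (degree_C_le.trans_lt hq)] at hp
    simpa using tendsto_atTop_add_const_right atTop b (ih hp)

theorem eventually_eval_pos {p : R[X]} (hp : 0 < p.leadingCoeff) :
    ∀ᶠ x in atTop, 0 < p.eval x := by
  rcases lt_or_ge 0 p.degree with hdeg | hdeg
  · exact (tendsto_eval_atTop hdeg hp).eventually_gt_atTop 0
  · rw [eq_C_of_degree_le_zero hdeg] at hp ⊢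
    simp only [leadingCoeff_C] at hp
    simp [hp]

theorem exists_gt_eval_pos_of_derivative_pos {p : R[X]} {y : R}
    (hp : ∀ c, y < c → 0 < p.derivative.eval c) : ∃ M, y < M ∧ 0 < p.eval M := by
  have hlead' : 0 < p.derivative.leadingCoeff := by
    by_contra! hle
    obtain ⟨c, hpc, hyc⟩ : ∃ c, p.derivative.eval c ≤ 0 ∧ y < c := by
      rcases hle.eq_or_lt with h0 | hlt
      · exact ⟨y + 1, by simp [leadingCoeff_eq_zero.1 h0], lt_add_one y⟩
      · have hneg : 0 < (-p.derivative).leadingCoeff := by simpa using hlt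
        obtain ⟨c, hc, hyc⟩ := ((eventually_eval_pos hneg).and (eventually_gt_atTop y)).exists
        exact ⟨c, by simpa using hc.le, hyc⟩
    exact (hp c hyc).not_ge hpc
  have hlead : 0 < p.leadingCoeff := by
    rw [leadingCoeff_derivative] at hlead'
    exact pos_of_mul_pos_left hlead' (Nat.cast_nonneg _)
  obtain ⟨M, hM, hyM⟩ := ((eventually_eval_pos hlead).and (eventually_gt_atTop y)).exists
  exact ⟨M, hyM, hM⟩

end IntermediateValue
section PartialIsomorphism

open Order (PartialIso)

section LinearOrder

variable {α β : Type*} [LinearOrder α] [LinearOrder β]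

theorem cmp_eq_cmp_of_notMem_Icc {a b c : α} (hab : a ≤ b) (hc : c ∉ Set.Icc a b) :
    cmp c a = cmp c b := by
  rcases lt_or_ge c a with hca | hac
  · rw [hca.cmp_eq_lt, (hca.trans_le hab).cmp_eq_lt]
  · have hbc : b < c := not_le.1 fun hcb => hc ⟨hac, hcb⟩
    rw [hbc.cmp_eq_gt, (hab.trans_lt hbc).cmp_eq_gt]

theorem cmp_eq_cmp_of_crossing {a a' : α} {b b' : β} (h : a ≤ a' → b' ≤ b → a = a' ∧ b = b')
    (h' : a' ≤ a → b ≤ b' → a = a' ∧ b = b') : cmp a a' = cmp b b' := by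
  rcases lt_or_ge a a' with ha | ha <;> rcases lt_or_ge b b' with hb | hb
  · rw [ha.cmp_eq_lt, hb.cmp_eq_lt]
  · exact absurd (h ha.le hb).1 ha.ne
  · exact absurd (h' ha hb.le).2 hb.ne
  · have hiff : a = a' ↔ b = b' := ⟨fun e => (h e.le hb).2, fun e => (h' ha e.le).1⟩
    rcases eq_or_ne a a' with e | e
    · rw [e.cmp_eq_eq, (hiff.1 e).cmp_eq_eq]
    · rw [(ha.lt_of_ne' e).cmp_eq_gt, (hb.lt_of_ne' (hiff.not.1 e)).cmp_eq_gt]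

/-- The cells of a finite partial order isomorphism `Z` are the points and the open intervals into
which the coordinates of its pairs cut the two lines; `Matches Z y₁ y₂` says that `y₁` and `y₂` lie
in corresponding cells. -/
def Matches (Z : PartialIso α β) (y₁ : α) (y₂ : β) : Prop :=
  ∀ p ∈ Z.val, cmp p.1 y₁ = cmp p.2 y₂

variable {Z Z' : PartialIso α β} {y₁ z₁ : α} {y₂ z₂ : β}

theorem Matches.mono (h : Matches Z' y₁ y₂) (hZ : Z ≤ Z') : Matches Z y₁ y₂ :=
  fun p hp => h p (hZ hp)

theorem matches_of_mem {p : α × β} (hp : p ∈ Z.val) : Matches Z p.1 p.2 :=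
  fun q hq => Z.property q hq p hp

theorem matches_comm : Matches Z.comm y₂ y₁ ↔ Matches Z y₁ y₂ := by
  simp only [Matches, PartialIso.comm, Subtype.map, Finset.forall_mem_image]
  exact forall₂_congr fun _ _ => eq_comm

theorem Matches.trans (h : Matches Z y₁ y₂) (h₁ : Matches Z z₁ y₂) (h₂ : Matches Z y₁ z₂) :
    Matches Z z₁ z₂ :=
  fun p hp => (h₁ p hp).trans ((h p hp).symm.trans (h₂ p hp))

theorem Matches.eq_iff_eq (h : Matches Z y₁ y₂) {p : α × β} (hp : p ∈ Z.val) :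
    p.1 = y₁ ↔ p.2 = y₂ :=
  eq_iff_eq_of_cmp_eq_cmp (h p hp)

theorem Matches.of_crossing (hy : Matches Z y₁ y₂) (hz : Matches Z z₁ z₂) (h₁ : y₁ ≤ z₁)
    (h₂ : z₂ ≤ y₂) : Matches Z z₁ y₂ := by
  intro p hp
  by_cases hmem : p.1 ∈ Set.Icc y₁ z₁
  · have hp₂ : p.2 ≤ z₂ := (le_iff_le_of_cmp_eq_cmp (hz p hp)).1 hmem.2
    have hp₂' : y₂ ≤ p.2 :=
      (le_iff_le_of_cmp_eq_cmp (cmp_eq_cmp_symm.1 (hy p hp))).1 hmem.1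
    rw [hz p hp, le_antisymm h₂ (hp₂'.trans hp₂)]
  · rw [← cmp_eq_cmp_of_notMem_Icc h₁ hmem, hy p hp]

end LinearOrder

section OrderedField

variable {R₁ R₂ : Type*} [Field R₁] [LinearOrder R₁] [Field R₂] [LinearOrder R₂]

/-- `f₁` and `f₂` have the same sign at any two points lying in corresponding cells of `Z`. -/
def SameSign (Z : PartialIso R₁ R₂) (f₁ : R₁[X]) (f₂ : R₂[X]) : Prop :=
  ∀ ⦃y₁ y₂⦄, Matches Z y₁ y₂ → SignType.sign (f₁.eval y₁) = SignType.sign (f₂.eval y₂)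

variable {Z Z' : PartialIso R₁ R₂} {f₁ : R₁[X]} {f₂ : R₂[X]}

theorem SameSign.mono (h : SameSign Z f₁ f₂) (hZ : Z ≤ Z') : SameSign Z' f₁ f₂ :=
  fun _ _ hy => h (hy.mono hZ)

theorem SameSign.comm (h : SameSign Z f₁ f₂) : SameSign Z.comm f₂ f₁ :=
  fun _ _ hy => (h (matches_comm.1 hy)).symm

variable [IsStrictOrderedRing R₁] [IsStrictOrderedRing R₂]

theorem SameSign.neg (h : SameSign Z f₁ f₂) : SameSign Z (-f₁) (-f₂) := fun y₁ y₂ hy => by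
  rw [eval_neg, eval_neg, Left.sign_neg, Left.sign_neg, h hy]

theorem SameSign.exists_mem_fst_eq (h : SameSign Z f₁ f₂) (hf₁ : f₁ ≠ 0) {y : R₁}
    (hy : f₁.eval y = 0) : ∃ p ∈ Z.val, p.1 = y := by
  by_contra! hZ
  obtain ⟨y₂, hy₂⟩ := Z.exists_across y
  obtain ⟨c, hyc, hc⟩ := Order.exists_between_finsets {y}
    ((Z.val.image Prod.fst ∪ f₁.roots.toFinset).filter (y < ·)) (by simp)
  simp only [Finset.mem_singleton, forall_eq, Finset.mem_filter] at hyc hc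
  have hcell : Matches Z c y₂ := fun p hp => by
    rw [← hy₂ p hp, cmp_eq_cmp_of_notMem_Icc hyc.le]
    rintro ⟨hle, hge⟩
    exact hge.not_gt (hc _ ⟨Finset.mem_union_left _ (Finset.mem_image_of_mem _ hp),
      hle.lt_of_ne' (hZ p hp)⟩)
  have hroot : f₁.eval c = 0 := by
    rw [← sign_eq_zero_iff, h hcell, ← h hy₂, hy, sign_zero]
  exact lt_irrefl c (hc c ⟨Finset.mem_union_right _ (by simp [hf₁, hroot]), hyc⟩)

theorem root_unique_of_sameSign_derivative [PolynomialIVT R₁]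
    (h : SameSign Z f₁.derivative f₂.derivative) (hf₁ : f₁.derivative ≠ 0) {y y' : R₁} {y₂ : R₂}
    (hy : Matches Z y y₂) (hy' : Matches Z y' y₂) (hroot : f₁.eval y = 0)
    (hroot' : f₁.eval y' = 0) : y = y' := by
  wlog hlt : y < y' generalizing y y'
  · rcases (not_lt.1 hlt).eq_or_lt with rfl | hgt
    · rfl
    · exact (this hy' hy hroot' hroot hgt).symm
  obtain ⟨c, ⟨hyc, hcy'⟩, hc⟩ := exists_derivative_eval_eq_zero hlt hroot hroot'
  obtain ⟨p, hp, rfl⟩ := h.exists_mem_fst_eq hf₁ hc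
  have hcmp : cmp p.1 y = cmp p.1 y' := (hy p hp).trans (hy' p hp).symm
  rw [hyc.cmp_eq_gt, hcy'.cmp_eq_lt] at hcmp
  cases hcmp

theorem cmp_root_eq_cmp_root [PolynomialIVT R₁] [PolynomialIVT R₂]
    (h : SameSign Z f₁.derivative f₂.derivative) (hf₁ : f₁.derivative ≠ 0)
    (hf₂ : f₂.derivative ≠ 0) {y₁ z₁ : R₁} {y₂ z₂ : R₂} (hy : Matches Z y₁ y₂)
    (hz : Matches Z z₁ z₂) (hy₁ : f₁.eval y₁ = 0) (hy₂ : f₂.eval y₂ = 0) (hz₁ : f₁.eval z₁ = 0)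
    (hz₂ : f₂.eval z₂ = 0) : cmp y₁ z₁ = cmp y₂ z₂ := by
  have unique₁ {a a' : R₁} {b : R₂} (ha : Matches Z a b) (ha' : Matches Z a' b)
      (h0 : f₁.eval a = 0) (h0' : f₁.eval a' = 0) : a = a' :=
    root_unique_of_sameSign_derivative h hf₁ ha ha' h0 h0'
  have unique₂ {a : R₁} {b b' : R₂} (hb : Matches Z a b) (hb' : Matches Z a b')
      (h0 : f₂.eval b = 0) (h0' : f₂.eval b' = 0) : b = b' :=
    root_unique_of_sameSign_derivative h.comm hf₂ (matches_comm.2 hb) (matches_comm.2 hb') h0 h0'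
  refine cmp_eq_cmp_of_crossing (fun h₁ h₂ => ?_) (fun h₁ h₂ => ?_)
  · have hcross := hy.of_crossing hz h₁ h₂
    exact ⟨unique₁ hy hcross hy₁ hz₁, unique₂ hcross hz hy₂ hz₂⟩
  · have hcross := hz.of_crossing hy h₁ h₂
    exact ⟨unique₁ hcross hz hy₁ hz₁, unique₂ hy hcross hy₂ hz₂⟩

theorem exists_gt_eval_pos_of_matches [PolynomialIVT R₁]
    (hZ : ∀ p ∈ Z.val, SignType.sign (f₁.eval p.1) = SignType.sign (f₂.eval p.2)) {y₁ : R₁}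
    {y₂ : R₂} (hy : Matches Z y₁ y₂) (hf₁ : ∀ y, Matches Z y y₂ → 0 < f₁.derivative.eval y)
    (hf₂ : ∀ y, Matches Z y₁ y → 0 < f₂.derivative.eval y) (h₁ : 0 ≤ f₁.eval y₁)
    (hmem : ∀ p ∈ Z.val, p.1 ≠ y₁) :
    ∃ M, y₂ < M ∧ 0 < f₂.eval M ∧ ∀ c ∈ Set.Ico y₂ M, Matches Z y₁ c := by
  have hmem₂ : ∀ p ∈ Z.val, p.2 ≠ y₂ := fun p hp => (hy.eq_iff_eq hp).not.1 (hmem p hp)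
  by_cases hex : (Z.val.filter fun p => y₁ < p.1).Nonempty
  · obtain ⟨p, hp, hmin⟩ := Finset.exists_min_image _ Prod.fst hex
    obtain ⟨hpZ, hyp⟩ := Finset.mem_filter.1 hp
    have hmin' : ∀ q ∈ Z.val, y₁ ≤ q.1 → p.1 ≤ q.1 := fun q hq hle =>
      hmin q (Finset.mem_filter.2 ⟨hq, hle.lt_of_ne' (hmem q hq)⟩)
    have hle_iff {q : R₁ × R₂} (hq : q ∈ Z.val) : y₁ ≤ q.1 ↔ y₂ ≤ q.2 :=
      le_iff_le_of_cmp_eq_cmp (cmp_eq_cmp_symm.1 (hy q hq))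
    have hincr : f₁.eval y₁ < f₁.eval p.1 := eval_lt_eval_of_derivative_pos hyp fun c hc =>
      hf₁ c fun q hq => by
        rw [← hy q hq, cmp_eq_cmp_of_notMem_Icc hc.1.le]
        exact fun hmem => (hmin' q hq hmem.1).not_gt (hmem.2.trans_lt hc.2)
    refine ⟨p.2, ?_, ?_, fun c hc q hq => ?_⟩
    · exact (lt_iff_lt_of_cmp_eq_cmp (cmp_eq_cmp_symm.1 (hy p hpZ))).1 hyp
    · rw [← sign_eq_one_iff, ← hZ p hpZ, sign_eq_one_iff]
      exact h₁.trans_lt hincr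
    · rw [hy q hq, cmp_eq_cmp_of_notMem_Icc hc.1]
      intro hmem
      have hpq := hmin' q hq ((hle_iff hq).2 hmem.1)
      exact ((le_iff_le_of_cmp_eq_cmp (Z.property p hpZ q hq)).1 hpq).not_gt
        (hmem.2.trans_lt hc.2)
  · have hcell : ∀ c, y₂ ≤ c → Matches Z y₁ c := fun c hc q hq => by
      rw [hy q hq, cmp_eq_cmp_of_notMem_Icc hc]
      intro hmem
      have hlt := hmem.1.lt_of_ne' (hmem₂ q hq)
      exact hex ⟨q, Finset.mem_filter.2
        ⟨hq, (lt_iff_lt_of_cmp_eq_cmp (cmp_eq_cmp_symm.1 (hy q hq))).2 hlt⟩⟩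
    obtain ⟨M, hyM, hM⟩ :=
      exists_gt_eval_pos_of_derivative_pos fun c hc => hf₂ c (hcell c (le_of_lt hc))
    exact ⟨M, hyM, hM, fun c hc => hcell c hc.1⟩

theorem exists_ge_root_of_matches [PolynomialIVT R₁] [PolynomialIVT R₂]
    (hZ : ∀ p ∈ Z.val, SignType.sign (f₁.eval p.1) = SignType.sign (f₂.eval p.2)) {y₁ : R₁}
    {y₂ : R₂} (hy : Matches Z y₁ y₂) (hf₁ : ∀ y, Matches Z y y₂ → 0 < f₁.derivative.eval y)
    (hf₂ : ∀ y, Matches Z y₁ y → 0 < f₂.derivative.eval y) (h₁ : 0 ≤ f₁.eval y₁)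
    (h₂ : f₂.eval y₂ ≤ 0) : ∃ y, y₂ ≤ y ∧ Matches Z y₁ y ∧ f₂.eval y = 0 := by
  rcases h₂.eq_or_lt with h₂ | h₂
  · exact ⟨y₂, le_rfl, hy, h₂⟩
  have hmem : ∀ p ∈ Z.val, p.1 ≠ y₁ := by
    rintro p hp rfl
    have hsign := hZ p hp
    rw [(hy.eq_iff_eq hp).1 rfl, sign_neg h₂, sign_eq_neg_one_iff] at hsign
    exact h₁.not_gt hsign
  obtain ⟨M, hyM, hM, hcell⟩ := exists_gt_eval_pos_of_matches hZ hy hf₁ hf₂ h₁ hmem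
  obtain ⟨c, hc, hroot⟩ := PolynomialIVT.hasIVT f₂ hyM (mul_neg_of_neg_of_pos h₂ hM)
  exact ⟨c, hc.1.le, hcell c ⟨hc.1.le, hc.2⟩, hroot⟩

theorem cmp_neg_neg (a b : R₁) : cmp (-a) (-b) = cmp b a :=
  StrictAnti.cmp_map_eq (fun _ _ => neg_lt_neg) a b

/-- The partial isomorphism consisting of the pairs `(-y₂, -y₁)` with `(y₁, y₂)` in `Z`; it turns
statements about the part of a cell above a point into statements about the part below it. -/
def reflect (Z : PartialIso R₁ R₂) : PartialIso R₂ R₁ :=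
  ⟨Z.val.image fun p => (-p.2, -p.1), by
    simp only [Finset.forall_mem_image, cmp_neg_neg]
    exact fun p hp q hq => (Z.property q hq p hp).symm⟩

theorem matches_reflect {y₁ : R₁} {y₂ : R₂} :
    Matches (reflect Z) (-y₂) (-y₁) ↔ Matches Z y₁ y₂ := by
  simp only [Matches, reflect, Finset.forall_mem_image, cmp_neg_neg]
  exact forall₂_congr fun _ _ => by rw [eq_comm, cmp_eq_cmp_symm]

theorem exists_le_root_of_matches [PolynomialIVT R₁] [PolynomialIVT R₂]
    (hZ : ∀ p ∈ Z.val, SignType.sign (f₁.eval p.1) = SignType.sign (f₂.eval p.2)) {y₁ : R₁}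
    {y₂ : R₂} (hy : Matches Z y₁ y₂) (hf₁ : ∀ y, Matches Z y y₂ → 0 < f₁.derivative.eval y)
    (hf₂ : ∀ y, Matches Z y₁ y → 0 < f₂.derivative.eval y) (h₁ : 0 ≤ f₁.eval y₁)
    (h₂ : f₂.eval y₂ ≤ 0) : ∃ y, y ≤ y₁ ∧ Matches Z y y₂ ∧ f₁.eval y = 0 := by
  obtain ⟨y, hle, hmatch, hroot⟩ := exists_ge_root_of_matches (Z := reflect Z)
    (f₁ := -f₂.comp (-X)) (f₂ := -f₁.comp (-X)) (y₁ := -y₂) (y₂ := -y₁)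
    (by
      simp only [reflect, Finset.forall_mem_image, eval_neg, eval_comp, eval_X, neg_neg,
        Left.sign_neg, neg_inj]
      exact fun p hp => (hZ p hp).symm)
    (matches_reflect.2 hy)
    (fun y hmatch => by
      rw [← neg_neg y, matches_reflect] at hmatch
      simpa [derivative_comp] using hf₂ (-y) hmatch)
    (fun y hmatch => by
      rw [← neg_neg y, matches_reflect] at hmatch
      simpa [derivative_comp] using hf₁ (-y) hmatch)
    (by simpa using h₂) (by simpa using h₁)
  rw [← neg_neg y, matches_reflect] at hmatch
  exact ⟨-y, neg_le.1 hle, hmatch, by simpa using hroot⟩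

/-- The root of `f₁` at or below `y₁` corresponds to the root of `f₂` at or above `y₂`, so they are
`y₁` and `y₂`. -/
theorem eval_eq_zero_of_matches_common_roots [PolynomialIVT R₁] [PolynomialIVT R₂]
    (hZ : ∀ p ∈ Z.val, SignType.sign (f₁.eval p.1) = SignType.sign (f₂.eval p.2)) {y₁ : R₁}
    {y₂ : R₂} (hy : Matches Z y₁ y₂) (hf₁ : ∀ y, Matches Z y y₂ → 0 < f₁.derivative.eval y)
    (hf₂ : ∀ y, Matches Z y₁ y → 0 < f₂.derivative.eval y)
    (hroots : ∀ z₁ z₂, Matches Z z₁ z₂ → f₁.eval z₁ = 0 → f₂.eval z₂ = 0 →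
      cmp z₁ y₁ = cmp z₂ y₂)
    (h₁ : 0 ≤ f₁.eval y₁) (h₂ : f₂.eval y₂ ≤ 0) : f₁.eval y₁ = 0 ∧ f₂.eval y₂ = 0 := by
  obtain ⟨z₁, hz₁, hmatch₁, hroot₁⟩ := exists_le_root_of_matches hZ hy hf₁ hf₂ h₁ h₂
  obtain ⟨z₂, hz₂, hmatch₂, hroot₂⟩ := exists_ge_root_of_matches hZ hy hf₁ hf₂ h₁ h₂
  have hcmp := hroots z₁ z₂ (hy.trans hmatch₁ hmatch₂) hroot₁ hroot₂
  obtain rfl : z₂ = y₂ := ((le_iff_le_of_cmp_eq_cmp hcmp).1 hz₁).antisymm hz₂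
  obtain rfl : z₁ = y₁ := (eq_iff_eq_of_cmp_eq_cmp hcmp).2 rfl
  exact ⟨hroot₁, hroot₂⟩

theorem sign_eq_sign_of_derivative_pos [PolynomialIVT R₁] [PolynomialIVT R₂]
    (hZ : ∀ p ∈ Z.val, SignType.sign (f₁.eval p.1) = SignType.sign (f₂.eval p.2))
    (hderiv : SameSign Z f₁.derivative f₂.derivative) {y₁ : R₁} {y₂ : R₂}
    (hy : Matches Z y₁ y₂) (hpos : 0 < f₁.derivative.eval y₁)
    (hroots : ∀ z₁ z₂, Matches Z z₁ z₂ → f₁.eval z₁ = 0 → f₂.eval z₂ = 0 →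
      cmp z₁ y₁ = cmp z₂ y₂) :
    SignType.sign (f₁.eval y₁) = SignType.sign (f₂.eval y₂) := by
  have hpos₂ : ∀ y, Matches Z y₁ y → 0 < f₂.derivative.eval y := fun y h => by
    rwa [← sign_eq_one_iff, ← hderiv h, sign_eq_one_iff]
  have hpos₁ : ∀ y, Matches Z y y₂ → 0 < f₁.derivative.eval y := fun y h => by
    rw [← sign_eq_one_iff, hderiv h, sign_eq_one_iff]
    exact hpos₂ y₂ hy
  have hdown := eval_eq_zero_of_matches_common_roots hZ hy hpos₁ hpos₂ hroots
  have hup := eval_eq_zero_of_matches_common_roots (Z := Z.comm) (f₁ := f₂) (f₂ := f₁)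
    (by
      simp only [PartialIso.comm, Subtype.map, Finset.forall_mem_image]
      exact fun p hp => (hZ p hp).symm)
    (matches_comm.2 hy) (fun y h => hpos₂ y (matches_comm.1 h))
    (fun y h => hpos₁ y (matches_comm.1 h))
    (fun z₂ z₁ h h₂ h₁ => (hroots z₁ z₂ (matches_comm.1 h) h₁ h₂).symm)
  rcases lt_trichotomy (f₁.eval y₁) 0 with h₁ | h₁ | h₁ <;>
    rcases lt_trichotomy (f₂.eval y₂) 0 with h₂ | h₂ | h₂ <;>
    grind [sign_neg, sign_pos, sign_zero]

theorem sign_eq_sign_of_common_roots [PolynomialIVT R₁] [PolynomialIVT R₂]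
    (hZ : ∀ p ∈ Z.val, SignType.sign (f₁.eval p.1) = SignType.sign (f₂.eval p.2))
    (hderiv : SameSign Z f₁.derivative f₂.derivative) (hf₁ : f₁.derivative ≠ 0) {y₁ : R₁} {y₂ : R₂}
    (hy : Matches Z y₁ y₂)
    (hroots : ∀ z₁ z₂, Matches Z z₁ z₂ → f₁.eval z₁ = 0 → f₂.eval z₂ = 0 →
      cmp z₁ y₁ = cmp z₂ y₂) :
    SignType.sign (f₁.eval y₁) = SignType.sign (f₂.eval y₂) := by
  rcases lt_trichotomy (f₁.derivative.eval y₁) 0 with hneg | hzero | hpos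
  · have hneg' := sign_eq_sign_of_derivative_pos (Z := Z) (f₁ := -f₁) (f₂ := -f₂)
      (fun p hp => by simp [Left.sign_neg, hZ p hp])
      (by simpa only [derivative_neg] using hderiv.neg) hy (by simpa using hneg)
      (fun z₁ z₂ h h₁ h₂ => hroots z₁ z₂ h (by simpa using h₁) (by simpa using h₂))
    simpa [Left.sign_neg] using hneg'
  · obtain ⟨p, hp, rfl⟩ := hderiv.exists_mem_fst_eq hf₁ hzero
    rw [hZ p hp, (hy.eq_iff_eq hp).1 rfl]
  · exact sign_eq_sign_of_derivative_pos hZ hderiv hy hpos hroots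

theorem exists_ge_sameSign_of_derivative [PolynomialIVT R₁] [PolynomialIVT R₂]
    (hZ : ∀ p ∈ Z.val, SignType.sign (f₁.eval p.1) = SignType.sign (f₂.eval p.2))
    (hderiv : SameSign Z f₁.derivative f₂.derivative) (hf₁ : f₁.derivative ≠ 0)
    (hf₂ : f₂.derivative ≠ 0) :
    ∃ Z' ≥ Z, (∀ p ∈ Z'.val, p ∈ Z.val ∨ f₁.eval p.1 = 0 ∧ f₂.eval p.2 = 0) ∧
      SameSign Z' f₁ f₂ := by
  classical
  have hne₁ : f₁ ≠ 0 := by rintro rfl; exact hf₁ derivative_zero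
  have hne₂ : f₂ ≠ 0 := by rintro rfl; exact hf₂ derivative_zero
  set W := (f₁.roots.toFinset ×ˢ f₂.roots.toFinset).filter fun p => Matches Z p.1 p.2 with hW
  have mem_W (p) : p ∈ W ↔ (f₁.eval p.1 = 0 ∧ f₂.eval p.2 = 0) ∧ Matches Z p.1 p.2 := by
    simp [hW, mem_roots hne₁, mem_roots hne₂]
  have hiso : ∀ p ∈ Z.val ∪ W, ∀ q ∈ Z.val ∪ W, cmp p.1 q.1 = cmp p.2 q.2 := by
    intro p hp q hq
    rw [Finset.mem_union, mem_W] at hp hq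
    rcases hp with hp | ⟨⟨hp₁, hp₂⟩, hp⟩ <;> rcases hq with hq | ⟨⟨hq₁, hq₂⟩, hq⟩
    · exact Z.property p hp q hq
    · exact hq p ‹_›
    · exact cmp_eq_cmp_symm.1 (hp q ‹_›)
    · exact cmp_root_eq_cmp_root hderiv hf₁ hf₂ hp hq hp₁ hp₂ hq₁ hq₂
  refine ⟨⟨Z.val ∪ W, hiso⟩, Finset.subset_union_left, fun p hp => ?_, fun y₁ y₂ hy => ?_⟩
  · exact (Finset.mem_union.1 hp).imp_right fun h => ((mem_W p).1 h).1
  · exact sign_eq_sign_of_common_roots hZ hderiv hf₁ (hy.mono Finset.subset_union_left)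
      fun z₁ z₂ h h₁ h₂ => hy (z₁, z₂) (Finset.mem_union_right _ ((mem_W _).2 ⟨⟨h₁, h₂⟩, h⟩))

end OrderedField

end PartialIsomorphism

section Reduction

theorem exists_finset_closed {α : Type*} (rank : α → ℕ) (op : α → α → Finset α)
    (hop : ∀ p q, ∀ x ∈ op p q, rank x < rank p ∧ rank x < rank q) (F : Finset α) :
    ∃ D ⊇ F, ∀ p ∈ D, ∀ q ∈ D, op p q ⊆ D := by
  classical
  have closed_above (k : ℕ) :
      ∃ D ⊇ F, ∀ p ∈ D, ∀ q ∈ D, ∀ x ∈ op p q, F.sup rank ≤ rank x + k → x ∈ D := by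
    induction k with
    | zero =>
      refine ⟨F, subset_rfl, fun p hp q _ x hx hle => ?_⟩
      exact absurd ((hop p q x hx).1.trans_le (Finset.le_sup hp)) hle.not_gt
    | succ k ih =>
      obtain ⟨D, hFD, hD⟩ := ih
      refine ⟨D ∪ ((D ×ˢ D).biUnion fun p => op p.1 p.2).filter
        (fun x => rank x + (k + 1) ≤ F.sup rank), hFD.trans Finset.subset_union_left, ?_⟩
      have mem_of_lt {p x : α} (hlt : rank x < rank p) (hle : F.sup rank ≤ rank x + (k + 1))
          (hp : p ∈ D ∪ ((D ×ˢ D).biUnion fun p => op p.1 p.2).filter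
            (fun x => rank x + (k + 1) ≤ F.sup rank)) : p ∈ D := by
        refine (Finset.mem_union.1 hp).resolve_right fun h => ?_
        have := (Finset.mem_filter.1 h).2
        omega
      intro p hp q hq x hx hle
      have hpD := mem_of_lt (hop p q x hx).1 hle hp
      have hqD := mem_of_lt (hop p q x hx).2 hle hq
      rcases le_or_gt (F.sup rank) (rank x + k) with hle' | hlt
      · exact Finset.mem_union_left _ (hD p hpD q hqD x hx hle')
      · refine Finset.mem_union_right _ (Finset.mem_filter.2 ⟨Finset.mem_biUnion.2
          ⟨(p, q), Finset.mem_product.2 ⟨hpD, hqD⟩, hx⟩, hlt⟩)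
  obtain ⟨D, hFD, hD⟩ := closed_above (F.sup rank)
  exact ⟨D, hFD, fun p hp q hq x hx => hD p hp q hq x hx (Nat.le_add_left _ _)⟩

theorem map_eraseLead_of_leadingCoeff_eq_zero {A B : Type*} [Semiring A] [Semiring B]
    (φ : A →+* B) {p : A[X]} (hp : φ p.leadingCoeff = 0) : p.eraseLead.map φ = p.map φ := by
  conv_rhs => rw [← eraseLead_add_C_mul_X_pow p, Polynomial.map_add, Polynomial.map_mul, map_C, hp,
    C_0, zero_mul, add_zero]

theorem pow_mul_eval_map_eq {A B : Type*} [CommRing A] [CommRing B] (φ : A →+* B)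
    {p q r s : A[X]} {c : A} {e : ℕ}
    (h : C c ^ e * p = q * s + r) {y : B} (hy : (q.map φ).eval y = 0) :
    φ c ^ e * (p.map φ).eval y = (r.map φ).eval y := by
  simpa [hy] using congrArg (fun f => (f.map φ).eval y) h

variable {A : Type*} [CommRing A] [IsDomain A]

theorem exists_pseudoMod (p q : A[X]) : ∃ (r s : A[X]) (e : ℕ),
    C q.leadingCoeff ^ e * p = q * s + r ∧ (q ≠ 0 → r.degree < q.degree) := by
  rcases eq_or_ne q 0 with rfl | hq
  · exact ⟨0, 0, 1, by simp, fun h => absurd rfl h⟩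
  induction hn : p.degree using WellFoundedLT.induction generalizing p with
  | _ n ih =>
    rcases lt_or_ge p.degree q.degree with hlt | hle
    · exact ⟨p, 0, 0, by simp, fun _ => hlt⟩
    have hp : p ≠ 0 := by
      rintro rfl
      exact hq (degree_eq_bot.1 (le_bot_iff.1 (degree_zero (R := A) ▸ hle)))
    have hlq : q.leadingCoeff ≠ 0 := leadingCoeff_ne_zero.2 hq
    have hlp : p.leadingCoeff ≠ 0 := leadingCoeff_ne_zero.2 hp
    set k := p.natDegree - q.natDegree
    have hdeg : (C q.leadingCoeff * p - C p.leadingCoeff * X ^ k * q).degree < p.degree := by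
      rw [← degree_C_mul hlq (p := p)]
      refine degree_sub_lt_left ?_ (mul_ne_zero (C_ne_zero.2 hlq) hp) ?_
      · rw [degree_C_mul hlq, degree_mul, degree_C_mul_X_pow _ hlp, degree_eq_natDegree hp,
          degree_eq_natDegree hq]
        norm_cast
        exact (Nat.sub_add_cancel (natDegree_le_natDegree hle)).symm
      · simp only [leadingCoeff_mul, leadingCoeff_C, leadingCoeff_X_pow, mul_one]
        exact mul_comm _ _
    obtain ⟨r, s, e, heq, hr⟩ := ih _ (hn ▸ hdeg) _ rfl
    refine ⟨r, s + C q.leadingCoeff ^ e * (C p.leadingCoeff * X ^ k), e + 1, ?_, hr⟩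
    linear_combination heq

/-- A pseudo-remainder of `p` modulo `q`: the remainder of the division by `q` of a multiple of `p`
by a power of the leading coefficient of `q`. -/
def pseudoMod (p q : A[X]) : A[X] := (exists_pseudoMod p q).choose

theorem degree_pseudoMod_lt (p : A[X]) {q : A[X]} (hq : q ≠ 0) :
    (pseudoMod p q).degree < q.degree :=
  let ⟨_, _, h⟩ := (exists_pseudoMod p q).choose_spec
  h.2 hq

theorem exists_C_pow_mul_eq_mul_add_pseudoMod (p q : A[X]) :
    ∃ (s : A[X]) (e : ℕ), C q.leadingCoeff ^ e * p = q * s + pseudoMod p q :=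
  let ⟨s, e, h⟩ := (exists_pseudoMod p q).choose_spec
  ⟨s, e, h.1⟩

/-- Stability under the degree-lowering operations that determine the signs of a polynomial from
those of polynomials of smaller degree. -/
structure IsReductionClosed (D : Finset A[X]) : Prop where
  derivative_mem : ∀ {p}, p ∈ D → p ≠ 0 → derivative p ∈ D
  eraseLead_mem : ∀ {p}, p ∈ D → p ≠ 0 → p.eraseLead ∈ D
  pseudoMod_mem : ∀ {p q}, p ∈ D → q ∈ D → q ≠ 0 → q.degree ≤ p.degree → pseudoMod p q ∈ D

theorem exists_isReductionClosed (F : Finset A[X]) : ∃ D ⊇ F, IsReductionClosed D := by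
  classical
  obtain ⟨D, hF, hD⟩ := exists_finset_closed (fun p : A[X] => p.degree.succ)
    (fun p q => ({derivative p, p.eraseLead, pseudoMod p q} : Finset A[X]).filter
      fun r => r.degree < p.degree ∧ r.degree < q.degree)
    (fun p q r hr => (Finset.mem_filter.1 hr).2.imp WithBot.succ_lt_succ WithBot.succ_lt_succ) F
  refine ⟨D, hF, fun hp h0 => hD _ hp _ hp ?_, fun hp h0 => hD _ hp _ hp ?_,
    fun hp hq h0 hle => hD _ hp _ hq ?_⟩
  · simp [degree_derivative_lt h0]
  · simp [degree_eraseLead_lt h0]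
  · simp [degree_pseudoMod_lt _ h0, (degree_pseudoMod_lt _ h0).trans_le hle]

end Reduction

section Transfer

open Order (PartialIso)

variable {A : Type*} [CommRing A]

theorem eval_map_finSuccEquiv {R : Type*} [CommRing R] {n : ℕ} (φ : A →+* R) (y : R)
    (x : Fin n → R) (p : MvPolynomial (Fin (n + 1)) A) :
    ((MvPolynomial.finSuccEquiv A n p).map (MvPolynomial.eval₂Hom φ x)).eval y =
      MvPolynomial.eval₂ φ (Fin.cons y x : Fin (n + 1) → R) p := by
  rw [eval_map]
  induction p using MvPolynomial.induction_on with
  | C a => simp [MvPolynomial.finSuccEquiv_apply]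
  | add p q hp hq => simp [hp, hq]
  | mul_X p i hp =>
    rw [map_mul, Polynomial.eval₂_mul, hp, MvPolynomial.eval₂_mul]
    congr 1
    cases i using Fin.cases <;>
      simp [MvPolynomial.finSuccEquiv_X_zero, MvPolynomial.finSuccEquiv_X_succ]

variable {R₁ R₂ : Type*} [Field R₁] [LinearOrder R₁] [Field R₂] [LinearOrder R₂]

/-- A finite partial isomorphism `Z` recording the signs of the polynomials of `E` specialized along
`φ₁` and `φ₂`: it consists of common roots of polynomials in `E`, and the signs agree on
corresponding cells. -/
structure IsSignTable (φ₁ : A →+* R₁) (φ₂ : A →+* R₂) (E : Finset A[X]) (Z : PartialIso R₁ R₂) :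
    Prop where
  exists_root : ∀ p ∈ Z.val, ∃ q ∈ E, φ₁ q.leadingCoeff ≠ 0 ∧ (q.map φ₁).eval p.1 = 0 ∧
    (q.map φ₂).eval p.2 = 0
  sameSign : ∀ q ∈ E, SameSign Z (q.map φ₁) (q.map φ₂)

variable {φ₁ : A →+* R₁} {φ₂ : A →+* R₂} {E : Finset A[X]} {Z : PartialIso R₁ R₂} {f : A[X]}

theorem IsSignTable.insert_of_sameSign [DecidableEq A[X]] (h : IsSignTable φ₁ φ₂ E Z)
    (hf : SameSign Z (f.map φ₁) (f.map φ₂)) : IsSignTable φ₁ φ₂ (insert f E) Z where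
  exists_root p hp :=
    let ⟨q, hq, hroot⟩ := h.exists_root p hp
    ⟨q, Finset.mem_insert_of_mem hq, hroot⟩
  sameSign := Finset.forall_mem_insert .. |>.2 ⟨hf, h.sameSign⟩

theorem IsSignTable.sameSign_of_degenerate (h : IsSignTable φ₁ φ₂ E Z)
    (hlc : SignType.sign (φ₁ f.leadingCoeff) = SignType.sign (φ₂ f.leadingCoeff))
    (herase : f ≠ 0 → f.eraseLead ∈ E) (hf : φ₁ f.leadingCoeff = 0 ∨ f.natDegree = 0) :
    SameSign Z (f.map φ₁) (f.map φ₂) := by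
  rcases hf with hf | hf
  · have hf₂ : φ₂ f.leadingCoeff = 0 := by rw [← sign_eq_zero_iff, ← hlc, hf, sign_zero]
    rcases eq_or_ne f 0 with rfl | h0
    · simp [SameSign]
    · rw [← map_eraseLead_of_leadingCoeff_eq_zero φ₁ hf,
        ← map_eraseLead_of_leadingCoeff_eq_zero φ₂ hf₂]
      exact h.sameSign _ (herase h0)
  · intro y₁ y₂ _
    rw [leadingCoeff, hf] at hlc
    rw [eq_C_of_natDegree_eq_zero hf]
    simpa using hlc

theorem derivative_map_ne_zero {R : Type*} [Field R] [CharZero R] {φ : A →+* R}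
    (hlc : φ f.leadingCoeff ≠ 0) (hdeg : f.natDegree ≠ 0) : derivative (f.map φ) ≠ 0 := by
  rwa [Ne, derivative_eq_zero, natDegree_map_of_leadingCoeff_ne_zero φ hlc]

variable [IsDomain A] [IsStrictOrderedRing R₁] [IsStrictOrderedRing R₂]

theorem IsSignTable.sign_eval_eq_sign_eval (h : IsSignTable φ₁ φ₂ E Z)
    (hlc : ∀ q ∈ E, SignType.sign (φ₁ q.leadingCoeff) = SignType.sign (φ₂ q.leadingCoeff))
    (hmod : ∀ q ∈ E, q ≠ 0 → pseudoMod f q ∈ E) (p : R₁ × R₂) (hp : p ∈ Z.val) :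
    SignType.sign ((f.map φ₁).eval p.1) = SignType.sign ((f.map φ₂).eval p.2) := by
  obtain ⟨q, hq, hlq, hq₁, hq₂⟩ := h.exists_root p hp
  have hq0 : q ≠ 0 := by rintro rfl; simp at hlq
  obtain ⟨s, e, hse⟩ := exists_C_pow_mul_eq_mul_add_pseudoMod f q
  have hsign := h.sameSign _ (hmod q hq hq0) (matches_of_mem hp)
  rw [← pow_mul_eval_map_eq φ₁ hse hq₁, ← pow_mul_eval_map_eq φ₂ hse hq₂, sign_mul, sign_mul,
    sign_pow, sign_pow, ← hlc q hq] at hsign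
  exact mul_left_cancel₀ (pow_ne_zero e (sign_ne_zero.2 hlq)) hsign

theorem IsSignTable.exists_insert [DecidableEq A[X]] [PolynomialIVT R₁] [PolynomialIVT R₂]
    (h : IsSignTable φ₁ φ₂ E Z)
    (hlc : ∀ q ∈ insert f E, SignType.sign (φ₁ q.leadingCoeff) = SignType.sign (φ₂ q.leadingCoeff))
    (hderiv : f ≠ 0 → derivative f ∈ E) (herase : f ≠ 0 → f.eraseLead ∈ E)
    (hmod : ∀ q ∈ E, q ≠ 0 → pseudoMod f q ∈ E) :
    ∃ Z', IsSignTable φ₁ φ₂ (insert f E) Z' := by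
  obtain ⟨hlf, hlE⟩ := (Finset.forall_mem_insert ..).1 hlc
  by_cases hf : φ₁ f.leadingCoeff = 0 ∨ f.natDegree = 0
  · exact ⟨Z, h.insert_of_sameSign (h.sameSign_of_degenerate hlf herase hf)⟩
  obtain ⟨hf₁, hdeg⟩ := not_or.1 hf
  have hf₂ : φ₂ f.leadingCoeff ≠ 0 := sign_ne_zero.1 (hlf ▸ sign_ne_zero.2 hf₁)
  have h0 : f ≠ 0 := by rintro rfl; simp at hdeg
  obtain ⟨Z', hle, hroots, hsame⟩ := exists_ge_sameSign_of_derivative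
    (h.sign_eval_eq_sign_eval hlE hmod)
    (by simpa only [derivative_map] using h.sameSign _ (hderiv h0))
    (derivative_map_ne_zero hf₁ hdeg) (derivative_map_ne_zero hf₂ hdeg)
  refine ⟨Z', fun p hp => ?_, (Finset.forall_mem_insert ..).2
    ⟨hsame, fun q hq => (h.sameSign q hq).mono hle⟩⟩
  rcases hroots p hp with hp | hp
  · obtain ⟨q, hq, hroot⟩ := h.exists_root p hp
    exact ⟨q, Finset.mem_insert_of_mem hq, hroot⟩
  · exact ⟨f, Finset.mem_insert_self .., hf₁, hp⟩

theorem exists_isSignTable [PolynomialIVT R₁] [PolynomialIVT R₂] {D : Finset A[X]}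
    (hD : IsReductionClosed D)
    (hlc : ∀ p ∈ D, SignType.sign (φ₁ p.leadingCoeff) = SignType.sign (φ₂ p.leadingCoeff))
    (hED : E ⊆ D) (hE : ∀ p ∈ E, ∀ q ∈ D, q.degree < p.degree → q ∈ E) :
    ∃ Z, IsSignTable φ₁ φ₂ E Z := by
  classical
  induction E using Finset.induction_on_max_value (degree (R := A)) with
  | empty => exact ⟨⟨∅, by simp⟩, by simp, by simp⟩
  | insert f E _ hmax ih =>
    have hfD : f ∈ D := hED (Finset.mem_insert_self ..)
    have hED' : E ⊆ D := (Finset.subset_insert ..).trans hED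
    have mem_of_lt {q : A[X]} (hq : q ∈ D) (hlt : q.degree < f.degree) : q ∈ E :=
      Finset.mem_of_mem_insert_of_ne (hE f (Finset.mem_insert_self ..) q hq hlt)
        (by rintro rfl; exact lt_irrefl _ hlt)
    obtain ⟨Z, hZ⟩ := ih hED' fun p hp q hq hlt => mem_of_lt hq (hlt.trans_le (hmax p hp))
    exact hZ.exists_insert (fun q hq => hlc q (hED hq))
      (fun h0 => mem_of_lt (hD.derivative_mem hfD h0) (degree_derivative_lt h0))
      (fun h0 => mem_of_lt (hD.eraseLead_mem hfD h0) (degree_eraseLead_lt h0))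
      (fun q hq h0 => mem_of_lt (hD.pseudoMod_mem hfD (hED' hq) h0 (hmax q hq))
        ((degree_pseudoMod_lt f h0).trans_le (hmax q hq)))

variable (R₁ R₂)

theorem exists_finset_forall_exists_sign_eval_eq [PolynomialIVT R₁] [PolynomialIVT R₂]
    (F : Finset A[X]) : ∃ G : Finset A, ∀ (φ₁ : A →+* R₁) (φ₂ : A →+* R₂),
      (∀ a ∈ G, SignType.sign (φ₁ a) = SignType.sign (φ₂ a)) → ∀ y₁ : R₁, ∃ y₂ : R₂, ∀ p ∈ F,
        SignType.sign ((p.map φ₁).eval y₁) = SignType.sign ((p.map φ₂).eval y₂) := by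
  classical
  obtain ⟨D, hF, hD⟩ := exists_isReductionClosed F
  refine ⟨D.image leadingCoeff, fun φ₁ φ₂ h y₁ => ?_⟩
  obtain ⟨Z, hZ⟩ := exists_isSignTable hD (fun p hp => h _ (Finset.mem_image_of_mem _ hp))
    subset_rfl fun _ _ _ hq _ => hq
  obtain ⟨y₂, hy⟩ := Z.exists_across y₁
  exact ⟨y₂, fun p hp => hZ.sameSign p (hF hp) hy⟩

theorem exists_finset_forall_exists_sign_eval₂_eq [PolynomialIVT R₁] [PolynomialIVT R₂] {n : ℕ}
    (F : Finset (MvPolynomial (Fin n) A)) : ∃ G : Finset A, ∀ (φ₁ : A →+* R₁) (φ₂ : A →+* R₂),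
      (∀ a ∈ G, SignType.sign (φ₁ a) = SignType.sign (φ₂ a)) →
      ∀ x₁ : Fin n → R₁, ∃ x₂ : Fin n → R₂, ∀ p ∈ F,
        SignType.sign (MvPolynomial.eval₂ φ₁ x₁ p) =
          SignType.sign (MvPolynomial.eval₂ φ₂ x₂ p) := by
  classical
  induction n with
  | zero =>
    refine ⟨F.image (MvPolynomial.coeff 0), fun φ₁ φ₂ h x₁ => ⟨Fin.elim0, fun p hp => ?_⟩⟩
    rw [MvPolynomial.eq_C_of_isEmpty p]
    simpa using h _ (Finset.mem_image_of_mem _ hp)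
  | succ n ih =>
    obtain ⟨G', hG'⟩ := exists_finset_forall_exists_sign_eval_eq R₁ R₂
      (F.image (MvPolynomial.finSuccEquiv A n))
    obtain ⟨G, hG⟩ := ih G'
    refine ⟨G, fun φ₁ φ₂ h x₁ => ?_⟩
    obtain ⟨x', hx'⟩ := hG φ₁ φ₂ h (Fin.tail x₁)
    obtain ⟨y, hy⟩ := hG' (MvPolynomial.eval₂Hom φ₁ (Fin.tail x₁)) (MvPolynomial.eval₂Hom φ₂ x')
      hx' (x₁ 0)
    refine ⟨Fin.cons y x', fun p hp => ?_⟩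
    have hsign := hy _ (Finset.mem_image_of_mem _ hp)
    rwa [eval_map_finSuccEquiv, eval_map_finSuccEquiv, Fin.cons_self_tail] at hsign

end Transfer

section HenselFactorization

section Semiring

variable {R S : Type*} [Semiring R] [Semiring S] {r : ℕ}

/-- The polynomial `∑ j < r, u j X ^ j`. -/
def ofVec (u : Fin r → R) : R[X] := ∑ j, C (u j) * X ^ (j : ℕ)

theorem degree_ofVec_lt (u : Fin r → R) : (ofVec u).degree < r := degree_sum_fin_lt u

theorem coeff_ofVec (u : Fin r → R) (j : Fin r) : (ofVec u).coeff j = u j := by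
  simp [ofVec, finsetSum_coeff, Fin.val_inj]

theorem coeff_ofVec_of_le (u : Fin r → R) {k : ℕ} (hk : r ≤ k) : (ofVec u).coeff k = 0 :=
  coeff_eq_zero_of_degree_lt ((degree_ofVec_lt u).trans_le (Nat.cast_le.2 hk))

theorem ofVec_eq_zero {u : Fin r → R} : ofVec u = 0 ↔ u = 0 := by
  refine ⟨fun h => funext fun j => ?_, fun h => by simp [ofVec, h]⟩
  rw [← coeff_ofVec u j, h, coeff_zero, Pi.zero_apply]

/-- The monic polynomial `X ^ r + ∑ j < r, u j X ^ j`. -/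
def monicOf (u : Fin r → R) : R[X] := X ^ r + ofVec u

theorem monic_monicOf (u : Fin r → R) : (monicOf u).Monic := monic_X_pow_add (degree_ofVec_lt u)

theorem degree_monicOf [Nontrivial R] (u : Fin r → R) : (monicOf u).degree = r := by
  rw [monicOf, degree_add_eq_left_of_degree_lt, degree_X_pow]
  rw [degree_X_pow]
  exact degree_ofVec_lt u

theorem natDegree_monicOf [Nontrivial R] (u : Fin r → R) : (monicOf u).natDegree = r :=
  natDegree_eq_of_degree_eq_some (degree_monicOf u)

theorem coeff_monicOf (u : Fin r → R) (j : Fin r) : (monicOf u).coeff j = u j := by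
  rw [monicOf, coeff_add, coeff_X_pow, if_neg j.2.ne, zero_add, coeff_ofVec]

theorem monicOf_injective : Function.Injective (monicOf : (Fin r → R) → R[X]) := fun u v h =>
  funext fun j => by rw [← coeff_monicOf u, h, coeff_monicOf]

theorem monicOf_coeff {p : R[X]} (hp : p.Monic) (hr : p.natDegree = r) :
    monicOf (fun j : Fin r => p.coeff j) = p := by
  subst hr
  conv_rhs => rw [hp.as_sum, Finset.sum_range]
  rfl

theorem map_monicOf (f : R →+* S) (u : Fin r → R) : (monicOf u).map f = monicOf (f ∘ u) := by
  simp [monicOf, ofVec, Polynomial.map_sum]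

end Semiring

section Analytic

variable {𝕜 : Type*} [RCLike 𝕜] {r s : ℕ}

/-- The lower coefficients of the product of two monic polynomials, as a function of theirs. -/
def mulCoeff (w : (Fin r → 𝕜) × (Fin s → 𝕜)) (i : Fin (r + s)) : 𝕜 :=
  (monicOf w.1 * monicOf w.2).coeff i

theorem monicOf_mulCoeff (w : (Fin r → 𝕜) × (Fin s → 𝕜)) :
    monicOf (mulCoeff w) = monicOf w.1 * monicOf w.2 :=
  monicOf_coeff ((monic_monicOf w.1).mul (monic_monicOf w.2)) (by
    rw [(monic_monicOf w.1).natDegree_mul (monic_monicOf w.2), natDegree_monicOf,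
      natDegree_monicOf])

theorem contDiff_coeff_monicOf {n : WithTop ℕ∞} (k : ℕ) :
    ContDiff 𝕜 n fun u : Fin r → 𝕜 => (monicOf u).coeff k := by
  simp only [monicOf, coeff_add]
  refine contDiff_const.add ?_
  rcases lt_or_ge k r with hk | hk
  · simpa only [coeff_ofVec _ ⟨k, hk⟩] using contDiff_apply 𝕜 𝕜 (⟨k, hk⟩ : Fin r)
  · simpa only [coeff_ofVec_of_le _ hk] using contDiff_const

theorem contDiff_mulCoeff {n : WithTop ℕ∞} :
    ContDiff 𝕜 n (mulCoeff : (Fin r → 𝕜) × (Fin s → 𝕜) → Fin (r + s) → 𝕜) := by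
  refine contDiff_pi.2 fun i => ?_
  simp only [mulCoeff, coeff_mul]
  exact ContDiff.sum fun kl _ => ((contDiff_coeff_monicOf kl.1).comp contDiff_fst).mul
    ((contDiff_coeff_monicOf kl.2).comp contDiff_snd)

theorem fderiv_mulCoeff_apply (w δ : (Fin r → 𝕜) × (Fin s → 𝕜)) (i : Fin (r + s)) :
    fderiv 𝕜 mulCoeff w δ i = (ofVec δ.1 * monicOf w.2 + monicOf w.1 * ofVec δ.2).coeff i := by
  have hline : HasDerivAt (fun t : 𝕜 => w + t • δ) δ 0 := by
    simpa using ((hasDerivAt_id (0 : 𝕜)).smul_const δ).const_add w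
  have hdiff : HasFDerivAt mulCoeff (fderiv 𝕜 mulCoeff w) (w + (0 : 𝕜) • δ) := by
    rw [zero_smul, add_zero]
    exact (contDiff_mulCoeff (n := 1).differentiable one_ne_zero).differentiableAt.hasFDerivAt
  refine (hasDerivAt_pi.1 (hdiff.comp_hasDerivAt (0 : 𝕜) hline) i).unique ?_
  have monicOf_add {k : ℕ} (u η : Fin k → 𝕜) (t : 𝕜) :
      monicOf (u + t • η) = monicOf u + C t * ofVec η := by
    simp [monicOf, ofVec, add_mul, Finset.sum_add_distrib, Finset.mul_sum, mul_assoc, add_assoc]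
  have hexp : (fun t : 𝕜 => (mulCoeff ∘ fun t : 𝕜 => w + t • δ) t i) = fun t =>
      (monicOf w.1 * monicOf w.2).coeff i +
        t * (ofVec δ.1 * monicOf w.2 + monicOf w.1 * ofVec δ.2).coeff i +
        t ^ 2 * (ofVec δ.1 * ofVec δ.2).coeff i := by
    funext t
    simp only [← coeff_C_mul, ← coeff_add, Function.comp_apply, mulCoeff, Prod.fst_add,
      Prod.snd_add, Prod.smul_fst, Prod.smul_snd, monicOf_add, C_pow]
    congr 1
    ring
  have hasDerivAt_quadratic (a b c : 𝕜) : HasDerivAt (fun t => a + t * b + t ^ 2 * c) b 0 := by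
    simpa using (((hasDerivAt_id (0 : 𝕜)).mul_const b).const_add a).fun_add
      (((hasDerivAt_id (0 : 𝕜)).pow 2).mul_const c)
  exact hexp ▸ hasDerivAt_quadratic _ _ _

theorem fderiv_mulCoeff_injective {w : (Fin r → 𝕜) × (Fin s → 𝕜)}
    (hw : IsCoprime (monicOf w.1) (monicOf w.2)) :
    Function.Injective (fderiv 𝕜 mulCoeff w) := by
  refine (injective_iff_map_eq_zero _).2 fun δ hδ => ?_
  have hdeg : (ofVec δ.1 * monicOf w.2 + monicOf w.1 * ofVec δ.2).degree < (r + s : ℕ) := by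
    refine (degree_add_le _ _).trans_lt (max_lt ?_ ?_) <;>
      rw [degree_mul, degree_monicOf, Nat.cast_add]
    · exact WithBot.add_lt_add_right (WithBot.natCast_ne_bot s) (degree_ofVec_lt _)
    · exact WithBot.add_lt_add_left (WithBot.natCast_ne_bot r) (degree_ofVec_lt _)
  have hzero : ofVec δ.1 * monicOf w.2 + monicOf w.1 * ofVec δ.2 = 0 := by
    ext i
    rcases lt_or_ge i (r + s) with hi | hi
    · exact (fderiv_mulCoeff_apply w δ ⟨i, hi⟩).symm.trans (congrFun hδ _)
    · exact coeff_eq_zero_of_degree_lt (hdeg.trans_le (Nat.cast_le.2 hi))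
  have h₁ : ofVec δ.1 = 0 :=
    eq_zero_of_dvd_of_degree_lt
      (hw.dvd_of_dvd_mul_right ⟨-ofVec δ.2, by linear_combination hzero⟩)
      ((degree_ofVec_lt _).trans_eq (degree_monicOf _).symm)
  have h₂ : ofVec δ.2 = 0 :=
    eq_zero_of_dvd_of_degree_lt
      (hw.symm.dvd_of_dvd_mul_left ⟨-ofVec δ.1, by linear_combination hzero⟩)
      ((degree_ofVec_lt _).trans_eq (degree_monicOf _).symm)
  exact Prod.ext (ofVec_eq_zero.1 h₁) (ofVec_eq_zero.1 h₂)

theorem exists_analyticAt_rightInverse_mulCoeff {w : (Fin r → 𝕜) × (Fin s → 𝕜)}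
    (hw : IsCoprime (monicOf w.1) (monicOf w.2)) :
    ∃ ψ : (Fin (r + s) → 𝕜) → (Fin r → 𝕜) × (Fin s → 𝕜), AnalyticAt 𝕜 ψ (mulCoeff w) ∧
      ∀ᶠ c in 𝓝 (mulCoeff w), mulCoeff (ψ c) = c := by
  have hsmooth : ContDiffAt 𝕜 ⊤ mulCoeff w := contDiff_mulCoeff.contDiffAt
  let L := (LinearMap.linearEquivOfInjective (fderiv 𝕜 mulCoeff w).toLinearMap
    (fderiv_mulCoeff_injective hw) (by simp)).toContinuousLinearEquiv
  have hL : HasFDerivAt mulCoeff (L : _ →L[𝕜] _) w :=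
    (hsmooth.differentiableAt (by simp)).hasFDerivAt.congr_fderiv rfl
  exact ⟨hsmooth.localInverse hL (by simp), (hsmooth.to_localInverse hL (by simp)).analyticAt,
    (hsmooth.hasStrictFDerivAt' hL (by simp)).eventually_right_inverse⟩

theorem exists_analyticAt_monicOf_eq_mul {E : Type*} [NormedAddCommGroup E] [NormedSpace 𝕜 E]
    {u₀ : Fin r → 𝕜} {v₀ : Fin s → 𝕜} (hcop : IsCoprime (monicOf u₀) (monicOf v₀))
    {γ : E → Fin (r + s) → 𝕜} {t₀ : E} (hγ : AnalyticAt 𝕜 γ t₀)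
    (h₀ : monicOf (γ t₀) = monicOf u₀ * monicOf v₀) :
    ∃ (u : E → Fin r → 𝕜) (v : E → Fin s → 𝕜), AnalyticAt 𝕜 u t₀ ∧ AnalyticAt 𝕜 v t₀ ∧
      ∀ᶠ t in 𝓝 t₀, monicOf (γ t) = monicOf (u t) * monicOf (v t) := by
  obtain ⟨ψ, hψ, hright⟩ := exists_analyticAt_rightInverse_mulCoeff (w := (u₀, v₀)) hcop
  have hγ₀ : γ t₀ = mulCoeff (u₀, v₀) :=
    monicOf_injective (h₀.trans (monicOf_mulCoeff (u₀, v₀)).symm)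
  rw [← hγ₀] at hψ hright
  have hψγ : AnalyticAt 𝕜 (ψ ∘ γ) t₀ := hψ.comp hγ
  refine ⟨fun t => (ψ (γ t)).1, fun t => (ψ (γ t)).2, analyticAt_fst.comp hψγ,
    analyticAt_snd.comp hψγ, ?_⟩
  filter_upwards [hγ.continuousAt.eventually hright] with t ht
  rw [← monicOf_mulCoeff, ht]

end Analytic

end HenselFactorization

section PuiseuxField

/-- An ultrafilter refining the filter of right neighbourhoods of `0`; it makes the ring of germs
at `0⁺` a linearly ordered field. -/
def rightUltrafilter : Ultrafilter ℝ := Ultrafilter.of (𝓝[>] 0)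

theorem rightUltrafilter_le : (rightUltrafilter : Filter ℝ) ≤ 𝓝[>] 0 := Ultrafilter.of_le _

/-- Germs at `0⁺` of real functions, along `rightUltrafilter`. -/
abbrev RightGerm : Type := Germ (rightUltrafilter : Filter ℝ) ℝ

/-- The germ at `0⁺` of `t ↦ h (t ^ (1 / N))`. -/
def puiseuxGerm (N : ℕ+) : (ℝ → ℝ) →+* RightGerm :=
  (Germ.coeRingHom (rightUltrafilter : Filter ℝ)).comp
    (RingHom.pi fun t => Pi.evalRingHom (fun _ : ℝ => ℝ) (t ^ ((N : ℝ)⁻¹)))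

variable {N M : ℕ+} {h g : ℝ → ℝ}

theorem tendsto_rpow_inv_nhdsGT_zero (N : ℕ+) :
    Tendsto (fun t : ℝ => t ^ ((N : ℝ)⁻¹)) (𝓝[>] 0) (𝓝[>] 0) := by
  have hN : (0 : ℝ) < (N : ℝ)⁻¹ := inv_pos.2 (Nat.cast_pos.2 N.pos)
  refine tendsto_nhdsWithin_iff.2 ⟨?_, eventually_mem_nhdsWithin.mono fun t ht =>
    Real.rpow_pos_of_pos ht _⟩
  simpa only [Real.zero_rpow hN.ne'] using
    (Real.continuousAt_rpow_const 0 _ (Or.inr hN.le)).tendsto.mono_left nhdsWithin_le_nhds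

theorem eventually_rightUltrafilter_root (N : ℕ+) {p : ℝ → Prop} (hp : ∀ᶠ τ in 𝓝[>] 0, p τ) :
    ∀ᶠ t in (rightUltrafilter : Filter ℝ), p (t ^ ((N : ℝ)⁻¹)) :=
  ((tendsto_rpow_inv_nhdsGT_zero N).eventually hp).filter_mono rightUltrafilter_le

theorem puiseuxGerm_congr (N : ℕ+) (hhg : h =ᶠ[𝓝[>] 0] g) : puiseuxGerm N h = puiseuxGerm N g :=
  Germ.coe_eq.2 (eventually_rightUltrafilter_root N hhg)

theorem puiseuxGerm_pos (N : ℕ+) (hh : ∀ᶠ τ in 𝓝[>] 0, 0 < h τ) : 0 < puiseuxGerm N h :=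
  Germ.coe_lt.2 (eventually_rightUltrafilter_root N hh)

theorem puiseuxGerm_inv (N : ℕ+) (h : ℝ → ℝ) : puiseuxGerm N h⁻¹ = (puiseuxGerm N h)⁻¹ := rfl

theorem sign_puiseuxGerm (N : ℕ+) {s : SignType}
    (hs : ∀ᶠ τ in 𝓝[>] 0, SignType.sign (h τ) = s) : SignType.sign (puiseuxGerm N h) = s := by
  cases s with
  | zero =>
    refine sign_eq_zero_iff.2 ((puiseuxGerm_congr N ?_).trans (map_zero _))
    exact hs.mono fun τ => sign_eq_zero_iff.1
  | pos => exact sign_eq_one_iff.2 (puiseuxGerm_pos N (hs.mono fun τ => sign_eq_one_iff.1))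
  | neg =>
    refine sign_eq_neg_one_iff.2 (neg_pos.1 ?_)
    rw [← map_neg]
    exact puiseuxGerm_pos N (hs.mono fun τ hτ => neg_pos.2 (sign_eq_neg_one_iff.1 hτ))

theorem puiseuxGerm_mul_comp_pow (N k : ℕ+) (h : ℝ → ℝ) :
    puiseuxGerm (N * k) (fun τ => h (τ ^ (k : ℕ))) = puiseuxGerm N h := by
  refine Germ.coe_eq.2 ?_
  filter_upwards [rightUltrafilter_le self_mem_nhdsWithin] with t (ht : 0 < t)
  refine congrArg h ?_
  rw [← Real.rpow_mul_natCast ht.le]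
  congr 1
  have hk : ((k : ℕ) : ℝ) ≠ 0 := Nat.cast_ne_zero.2 k.ne_zero
  rw [PNat.mul_coe, Nat.cast_mul, mul_inv, inv_mul_cancel_right₀ hk]

theorem exists_puiseuxGerm_eq_comp_pow (hNM : N ∣ M) :
    ∃ k : ℕ+, ∀ h, puiseuxGerm N h = puiseuxGerm M fun τ => h (τ ^ (k : ℕ)) := by
  obtain ⟨k, rfl⟩ := hNM
  exact ⟨k, fun h => (puiseuxGerm_mul_comp_pow N k h).symm⟩

theorem meromorphicAt_comp_pow (hh : MeromorphicAt h 0) (k : ℕ+) :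
    MeromorphicAt (fun τ => h (τ ^ (k : ℕ))) 0 :=
  MeromorphicAt.comp_analyticAt (g := fun τ : ℝ => τ ^ (k : ℕ)) (by simpa using hh) (by fun_prop)

theorem analyticAt_comp_pow (hh : AnalyticAt ℝ h 0) (k : ℕ+) :
    AnalyticAt ℝ (fun τ => h (τ ^ (k : ℕ))) 0 :=
  AnalyticAt.comp (f := fun τ : ℝ => τ ^ (k : ℕ)) (by simpa using hh) (by fun_prop)

theorem eventually_eq_zero_or_eq_zpow_mul_of_meromorphicAt (hh : MeromorphicAt h 0) :
    (∀ᶠ τ in 𝓝[>] 0, h τ = 0) ∨ ∃ (k : ℤ) (g : ℝ → ℝ), AnalyticAt ℝ g 0 ∧ g 0 ≠ 0 ∧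
      ∀ᶠ τ in 𝓝[>] 0, h τ = τ ^ k * g τ := by
  rcases eq_or_ne (meromorphicOrderAt h 0) ⊤ with htop | hfin
  · exact Or.inl ((meromorphicOrderAt_eq_top_iff.1 htop).filter_mono (nhdsGT_le_nhdsNE 0))
  · obtain ⟨g, hg, hg₀, hhg⟩ := (meromorphicOrderAt_ne_top_iff hh).1 hfin
    refine Or.inr ⟨(meromorphicOrderAt h 0).untop₀, g, hg, hg₀, ?_⟩
    filter_upwards [hhg.filter_mono (nhdsGT_le_nhdsNE 0)] with τ hτ
    simpa only [sub_zero, smul_eq_mul] using hτ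

theorem exists_eventually_sign_eq_of_meromorphicAt (hh : MeromorphicAt h 0) :
    ∃ s : SignType, ∀ᶠ τ in 𝓝[>] 0, SignType.sign (h τ) = s := by
  rcases eventually_eq_zero_or_eq_zpow_mul_of_meromorphicAt hh with h₀ | ⟨k, g, hg, hg₀, hhg⟩
  · exact ⟨0, h₀.mono fun τ => sign_eq_zero_iff.2⟩
  · have hsign : ∀ᶠ τ in 𝓝 0, SignType.sign (g τ) = SignType.sign (g 0) := by
      simpa only [nhds_discrete, tendsto_pure, Function.comp_apply] using
        (continuousAt_sign_of_ne_zero hg₀).tendsto.comp hg.continuousAt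
    refine ⟨SignType.sign (g 0), ?_⟩
    filter_upwards [hhg, hsign.filter_mono nhdsWithin_le_nhds, self_mem_nhdsWithin]
      with τ hτ hsτ (hpos : 0 < τ)
    rw [hτ, sign_mul, sign_pos (zpow_pos hpos k), one_mul, hsτ]

theorem eventually_sign_eq_sign_puiseuxGerm (N : ℕ+) (hh : MeromorphicAt h 0) :
    ∀ᶠ τ in 𝓝[>] 0, SignType.sign (h τ) = SignType.sign (puiseuxGerm N h) := by
  obtain ⟨s, hs⟩ := exists_eventually_sign_eq_of_meromorphicAt hh
  rwa [sign_puiseuxGerm N hs]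

/-- The germs at `0⁺` of the convergent real Puiseux series. -/
def PuiseuxField : Subfield RightGerm where
  carrier := {x | ∃ (N : ℕ+) (h : ℝ → ℝ), MeromorphicAt h 0 ∧ puiseuxGerm N h = x}
  zero_mem' := ⟨1, 0, .const 0 0, map_zero _⟩
  one_mem' := ⟨1, 1, .const 1 0, map_one _⟩
  add_mem' := by
    rintro _ _ ⟨N, h, hh, rfl⟩ ⟨M, g, hg, rfl⟩
    obtain ⟨k, hk⟩ := exists_puiseuxGerm_eq_comp_pow (dvd_mul_right N M)
    obtain ⟨l, hl⟩ := exists_puiseuxGerm_eq_comp_pow (dvd_mul_left M N)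
    exact ⟨N * M, _, (meromorphicAt_comp_pow hh k).add (meromorphicAt_comp_pow hg l), by
      rw [hk h, hl g, ← map_add]⟩
  mul_mem' := by
    rintro _ _ ⟨N, h, hh, rfl⟩ ⟨M, g, hg, rfl⟩
    obtain ⟨k, hk⟩ := exists_puiseuxGerm_eq_comp_pow (dvd_mul_right N M)
    obtain ⟨l, hl⟩ := exists_puiseuxGerm_eq_comp_pow (dvd_mul_left M N)
    exact ⟨N * M, _, (meromorphicAt_comp_pow hh k).mul (meromorphicAt_comp_pow hg l), by
      rw [hk h, hl g, ← map_mul]⟩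
  neg_mem' := by
    rintro _ ⟨N, h, hh, rfl⟩
    exact ⟨N, -h, hh.neg, map_neg _ _⟩
  inv_mem' := by
    rintro _ ⟨N, h, hh, rfl⟩
    exact ⟨N, h⁻¹, hh.inv, puiseuxGerm_inv N h⟩

theorem puiseuxGerm_mem (N : ℕ+) (hh : MeromorphicAt h 0) : puiseuxGerm N h ∈ PuiseuxField :=
  ⟨N, h, hh, rfl⟩

theorem exists_meromorphicAt_puiseuxGerm_eq {ι : Type*} [Finite ι] (x : ι → PuiseuxField) :
    ∃ (N : ℕ+) (h : ι → ℝ → ℝ), ∀ i, MeromorphicAt (h i) 0 ∧ puiseuxGerm N (h i) = x i := by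
  cases nonempty_fintype ι
  choose N h hh hx using fun i => (x i).2
  choose k hk using fun i =>
    exists_puiseuxGerm_eq_comp_pow (Finset.dvd_prod_of_mem N (Finset.mem_univ i))
  exact ⟨∏ i, N i, _, fun i => ⟨meromorphicAt_comp_pow (hh i) (k i), by rw [← hk, hx]⟩⟩

section Residue

/-- The graph of the residue homomorphism: pairs `(x, r)` such that the Puiseux series `x` is
bounded with value `r` at `0`. -/
def residueGraph : Subring (PuiseuxField × ℝ) where
  carrier := {p | ∃ (N : ℕ+) (g : ℝ → ℝ), AnalyticAt ℝ g 0 ∧ g 0 = p.2 ∧ puiseuxGerm N g = p.1}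
  zero_mem' := ⟨1, 0, analyticAt_const, rfl, map_zero _⟩
  one_mem' := ⟨1, 1, analyticAt_const, rfl, map_one _⟩
  add_mem' := by
    rintro ⟨_, _⟩ ⟨_, _⟩ ⟨N, h, hh, rfl, hx⟩ ⟨M, g, hg, rfl, hy⟩
    obtain ⟨k, hk⟩ := exists_puiseuxGerm_eq_comp_pow (dvd_mul_right N M)
    obtain ⟨l, hl⟩ := exists_puiseuxGerm_eq_comp_pow (dvd_mul_left M N)
    refine ⟨N * M, _, (analyticAt_comp_pow hh k).add (analyticAt_comp_pow hg l), by simp, ?_⟩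
    rw [map_add, ← hk, ← hl, hx, hy]
    rfl
  mul_mem' := by
    rintro ⟨_, _⟩ ⟨_, _⟩ ⟨N, h, hh, rfl, hx⟩ ⟨M, g, hg, rfl, hy⟩
    obtain ⟨k, hk⟩ := exists_puiseuxGerm_eq_comp_pow (dvd_mul_right N M)
    obtain ⟨l, hl⟩ := exists_puiseuxGerm_eq_comp_pow (dvd_mul_left M N)
    refine ⟨N * M, _, (analyticAt_comp_pow hh k).mul (analyticAt_comp_pow hg l), by simp, ?_⟩
    rw [map_mul, ← hk, ← hl, hx, hy]
    rfl
  neg_mem' := by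
    rintro ⟨_, _⟩ ⟨N, h, hh, rfl, hx⟩
    exact ⟨N, -h, hh.neg, rfl, by rw [map_neg, hx]; rfl⟩

/-- The Puiseux series `x` is bounded, with value `r` at `0`. -/
def HasResidue (x : PuiseuxField) (r : ℝ) : Prop := (x, r) ∈ residueGraph

theorem exists_analyticAt_puiseuxGerm_eq {ι : Type*} [Finite ι] {x : ι → PuiseuxField} {r : ι → ℝ}
    (hx : ∀ i, HasResidue (x i) (r i)) :
    ∃ (N : ℕ+) (g : ι → ℝ → ℝ),
      ∀ i, AnalyticAt ℝ (g i) 0 ∧ g i 0 = r i ∧ puiseuxGerm N (g i) = x i := by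
  cases nonempty_fintype ι
  choose N g hg hg₀ hx using hx
  choose k hk using fun i =>
    exists_puiseuxGerm_eq_comp_pow (Finset.dvd_prod_of_mem N (Finset.mem_univ i))
  exact ⟨∏ i, N i, _, fun i => ⟨analyticAt_comp_pow (hg i) (k i), by simp [hg₀], by rw [← hk, hx]⟩⟩

variable {x y : PuiseuxField} {r s : ℝ}

theorem hasResidue_zero : HasResidue 0 0 := residueGraph.zero_mem

theorem hasResidue_one : HasResidue 1 1 := residueGraph.one_mem

theorem HasResidue.mul (hx : HasResidue x r) (hy : HasResidue y s) : HasResidue (x * y) (r * s) :=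
  residueGraph.mul_mem hx hy

theorem HasResidue.pow (hx : HasResidue x r) (k : ℕ) : HasResidue (x ^ k) (r ^ k) :=
  residueGraph.pow_mem hx k

theorem HasResidue.sum {ι : Type*} {t : Finset ι} {x : ι → PuiseuxField} {r : ι → ℝ}
    (hx : ∀ i ∈ t, HasResidue (x i) (r i)) : HasResidue (∑ i ∈ t, x i) (∑ i ∈ t, r i) := by
  simpa only [HasResidue, prod_mk_sum] using residueGraph.sum_mem hx

theorem HasResidue.inv (hx : HasResidue x r) (hr : r ≠ 0) : HasResidue x⁻¹ r⁻¹ := by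
  obtain ⟨N, g, hg, rfl, hx⟩ := hx
  exact ⟨N, g⁻¹, hg.inv hr, rfl, by rw [puiseuxGerm_inv, hx]; rfl⟩

theorem HasResidue.pos (hx : HasResidue x r) (hr : 0 < r) : 0 < x := by
  obtain ⟨N, g, hg, rfl, hx⟩ := hx
  have hpos : 0 < puiseuxGerm N g := puiseuxGerm_pos N <|
    (hg.continuousAt.eventually (lt_mem_nhds hr)).filter_mono nhdsWithin_le_nhds
  rwa [hx] at hpos

theorem HasResidue.eval {F : PuiseuxField[X]} {F₀ : ℝ[X]}
    (hF : ∀ i, HasResidue (F.coeff i) (F₀.coeff i)) (hx : HasResidue x r) :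
    HasResidue (F.eval x) (F₀.eval r) := by
  rw [eval_eq_sum_range' (Nat.lt_succ_of_le (le_max_left F.natDegree F₀.natDegree)),
    eval_eq_sum_range' (Nat.lt_succ_of_le (le_max_right F.natDegree F₀.natDegree))]
  exact HasResidue.sum fun i _ => (hF i).mul (hx.pow i)

end Residue

section Monomial

/-- The Puiseux monomial `t ^ q`. -/
def puiseuxMonomial (q : ℚ) : PuiseuxField :=
  ⟨puiseuxGerm q.pnatDen fun τ => τ ^ q.num, puiseuxGerm_mem _ (by fun_prop)⟩

theorem puiseuxGerm_zpow (N : ℕ+) (k : ℤ) :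
    puiseuxGerm N (fun τ => τ ^ k) =
      ((fun t : ℝ => t ^ (((k : ℚ) / (N : ℕ) : ℚ) : ℝ) : ℝ → ℝ) : RightGerm) := by
  refine Germ.coe_eq.2 ?_
  filter_upwards [rightUltrafilter_le self_mem_nhdsWithin] with t (ht : 0 < t)
  calc (t ^ ((N : ℝ)⁻¹)) ^ k = t ^ ((N : ℝ)⁻¹ * k) := (Real.rpow_mul_intCast ht.le _ _).symm
    _ = _ := by push_cast; rw [div_eq_inv_mul]

theorem coe_puiseuxMonomial (q : ℚ) :
    (puiseuxMonomial q : RightGerm) = ((fun t : ℝ => t ^ (q : ℝ) : ℝ → ℝ) : RightGerm) := by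
  refine (puiseuxGerm_zpow _ _).trans ?_
  rw [Rat.coe_pnatDen, Rat.num_div_den]

theorem puiseuxMonomial_add (p q : ℚ) :
    puiseuxMonomial (p + q) = puiseuxMonomial p * puiseuxMonomial q := by
  refine Subtype.ext ?_
  rw [Subfield.coe_mul]
  simp only [coe_puiseuxMonomial]
  refine Germ.coe_eq.2 ?_
  filter_upwards [rightUltrafilter_le self_mem_nhdsWithin] with t (ht : 0 < t)
  rw [Rat.cast_add, Real.rpow_add ht]

theorem puiseuxMonomial_zero : puiseuxMonomial 0 = 1 := by
  refine Subtype.ext ?_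
  rw [coe_puiseuxMonomial]
  simp only [Rat.cast_zero, Real.rpow_zero]
  rfl

theorem puiseuxMonomial_pow (q : ℚ) (k : ℕ) : puiseuxMonomial q ^ k = puiseuxMonomial (k * q) := by
  induction k with
  | zero => rw [pow_zero, Nat.cast_zero, zero_mul, puiseuxMonomial_zero]
  | succ k ih => rw [pow_succ, ih, ← puiseuxMonomial_add, Nat.cast_succ, add_one_mul]

theorem inv_puiseuxMonomial (q : ℚ) : (puiseuxMonomial q)⁻¹ = puiseuxMonomial (-q) :=
  inv_eq_of_mul_eq_one_left (by rw [← puiseuxMonomial_add, neg_add_cancel, puiseuxMonomial_zero])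

theorem puiseuxMonomial_pos (q : ℚ) : 0 < puiseuxMonomial q :=
  puiseuxGerm_pos _ <| eventually_mem_nhdsWithin.mono fun _ hτ => zpow_pos hτ _

theorem hasResidue_puiseuxMonomial {q : ℚ} (hq : 0 < q) : HasResidue (puiseuxMonomial q) 0 := by
  have hnum : 0 < q.num := Rat.num_pos.2 hq
  have hanalytic : AnalyticAt ℝ (fun τ : ℝ => τ ^ q.num) 0 := by
    lift q.num to ℕ using hnum.le with k
    simp only [zpow_natCast]
    fun_prop
  exact ⟨q.pnatDen, fun τ => τ ^ q.num, hanalytic, zero_zpow _ hnum.ne', rfl⟩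

theorem HasResidue.puiseuxMonomial_mul {u : PuiseuxField} {r : ℝ} (hu : HasResidue u r) {q : ℚ}
    (hq : 0 ≤ q) : HasResidue (puiseuxMonomial q * u) (if q = 0 then r else 0) := by
  rcases hq.eq_or_lt with rfl | hq
  · rwa [if_pos rfl, puiseuxMonomial_zero, one_mul]
  · rw [if_neg hq.ne', ← zero_mul r]
    exact (hasResidue_puiseuxMonomial hq).mul hu

theorem exists_eq_puiseuxMonomial_mul (x : PuiseuxField) :
    ∃ (q : ℚ) (u : PuiseuxField) (r : ℝ),
      HasResidue u r ∧ (r = 0 → x = 0) ∧ x = puiseuxMonomial q * u := by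
  obtain ⟨_, N, h, hh, rfl⟩ := x
  rcases eventually_eq_zero_or_eq_zpow_mul_of_meromorphicAt hh with h₀ | ⟨k, g, hg, hg₀, hhg⟩
  · have hzero : puiseuxGerm N h = 0 := (puiseuxGerm_congr N h₀).trans (map_zero _)
    exact ⟨0, 0, 0, hasResidue_zero, fun _ => Subtype.ext hzero, by
      rw [mul_zero]; exact Subtype.ext hzero⟩
  · refine ⟨k / (N : ℕ), ⟨puiseuxGerm N g, puiseuxGerm_mem N hg.meromorphicAt⟩, g 0,
      ⟨N, g, hg, rfl, rfl⟩, fun h => absurd h hg₀, Subtype.ext ?_⟩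
    rw [Subfield.coe_mul, coe_puiseuxMonomial, ← puiseuxGerm_zpow, ← map_mul]
    exact puiseuxGerm_congr N hhg

theorem exists_hasResidue_or_hasResidue_inv (x : PuiseuxField) :
    (∃ r, HasResidue x r) ∨ x ≠ 0 ∧ HasResidue x⁻¹ 0 := by
  obtain ⟨q, u, r, hu, hr, hxu⟩ := exists_eq_puiseuxMonomial_mul x
  rcases eq_or_ne x 0 with rfl | hx
  · exact Or.inl ⟨0, hasResidue_zero⟩
  rcases le_or_gt 0 q with hq | hq
  · exact Or.inl ⟨_, hxu ▸ hu.puiseuxMonomial_mul hq⟩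
  · have hinv : x⁻¹ = puiseuxMonomial (-q) * u⁻¹ := by
      rw [← inv_puiseuxMonomial, ← mul_inv, ← hxu]
    rw [hinv, ← zero_mul r⁻¹]
    exact Or.inr ⟨hx, (hasResidue_puiseuxMonomial (neg_pos.2 hq)).mul (hu.inv (mt hr hx))⟩

end Monomial

end PuiseuxField

section NewtonPuiseux

section IVT

variable {K : Type*} [Field K] [LinearOrder K] [IsStrictOrderedRing K] {f g : K[X]}

theorem HasIVT.mul (hf : HasIVT f) (hg : HasIVT g) : HasIVT (f * g) := by
  intro a b hab h
  rw [eval_mul, eval_mul, mul_mul_mul_comm] at h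
  rcases mul_neg_iff.1 h with ⟨_, hneg⟩ | ⟨hneg, _⟩
  · obtain ⟨c, hc, hgc⟩ := hg hab hneg
    exact ⟨c, hc, by rw [eval_mul, hgc, mul_zero]⟩
  · obtain ⟨c, hc, hfc⟩ := hf hab hneg
    exact ⟨c, hc, by rw [eval_mul, hfc, zero_mul]⟩

theorem HasIVT.of_forall_eval_pos (hf : ∀ x, 0 < f.eval x) : HasIVT f := fun a b _ h =>
  absurd h (mul_pos (hf a) (hf b)).not_gt

theorem hasIVT_X : HasIVT (X : K[X]) := by
  intro a b hab h
  rw [eval_X, eval_X] at h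
  rcases mul_neg_iff.1 h with ⟨ha, hb⟩ | ⟨ha, hb⟩
  · exact absurd hab (hb.trans ha).not_gt
  · exact ⟨0, ⟨ha, hb⟩, eval_X⟩

theorem hasIVT_X_pow (d : ℕ) : HasIVT (X ^ d : K[X]) := by
  induction d with
  | zero => exact .of_forall_eval_pos fun x => by simp
  | succ d ih => exact pow_succ (X : K[X]) d ▸ ih.mul hasIVT_X

theorem HasIVT.of_taylor {s : K} (hf : HasIVT (taylor s f)) : HasIVT f := by
  intro a b hab h
  obtain ⟨c, hc, hroot⟩ := hf (sub_lt_sub_right hab s) (by simpa only [taylor_eval_sub] using h)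
  exact ⟨c + s, ⟨sub_lt_iff_lt_add.1 hc.1, lt_sub_iff_add_lt.1 hc.2⟩, by rwa [taylor_eval] at hroot⟩

theorem HasIVT.of_scaleRoots {s : K} (hs : 0 < s) (hf : HasIVT (scaleRoots f s)) : HasIVT f := by
  have eval_scaleRoots (x : K) :
      (scaleRoots f s).eval (s * x) = s ^ f.natDegree * f.eval x := by
    simpa only [eval₂_id, RingHom.id_apply] using scaleRoots_eval₂_mul (p := f) (RingHom.id K) x s
  intro a b hab h
  obtain ⟨c, hc, hroot⟩ := hf (mul_lt_mul_of_pos_left hab hs) (by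
    rw [eval_scaleRoots, eval_scaleRoots, mul_mul_mul_comm]
    exact mul_neg_of_pos_of_neg (by positivity) h)
  refine ⟨s⁻¹ * c, ⟨(lt_inv_mul_iff₀ hs).2 hc.1, (inv_mul_lt_iff₀ hs).2 hc.2⟩, ?_⟩
  rw [← mul_inv_cancel_left₀ hs.ne' c, eval_scaleRoots] at hroot
  exact (mul_eq_zero.1 hroot).resolve_left (pow_pos hs _).ne'

theorem eval_pos_of_forall_eval_ne_zero [PolynomialIVT K] (hf : 0 < f.leadingCoeff)
    (hroot : ∀ x, f.eval x ≠ 0) (x : K) : 0 < f.eval x := by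
  by_contra! hneg
  obtain ⟨y, hy, hxy⟩ := ((eventually_eval_pos hf).and (eventually_gt_atTop x)).exists
  obtain ⟨c, _, hc⟩ := PolynomialIVT.hasIVT f hxy
    (mul_neg_of_neg_of_pos (hneg.lt_of_ne (hroot x)) hy)
  exact hroot c hc

theorem even_natDegree_of_forall_eval_ne_zero [PolynomialIVT K] (hf : 0 < f.leadingCoeff)
    (hroot : ∀ x, f.eval x ≠ 0) : Even f.natDegree := by
  by_contra hodd
  rw [Nat.not_even_iff_odd] at hodd
  have hreflect : 0 < (-(f.comp (-X))).leadingCoeff := by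
    rw [leadingCoeff_neg, leadingCoeff_comp (by simp), leadingCoeff_neg, leadingCoeff_X,
      hodd.neg_one_pow, mul_neg_one, neg_neg]
    exact hf
  have hneg := eval_pos_of_forall_eval_ne_zero hreflect
    (fun x => by simpa using hroot (-x)) 0
  have hpos := eval_pos_of_forall_eval_ne_zero hf hroot 0
  simp only [eval_neg, eval_comp, eval_X, neg_zero] at hneg
  exact hneg.not_gt (neg_lt_zero.2 hpos)

theorem nextCoeff_taylor_of_monic {R : Type*} [CommRing R] {p : R[X]} (hp : p.Monic) (s : R) :
    (taylor s p).nextCoeff = p.nextCoeff + p.natDegree * s := by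
  rcases Nat.eq_zero_or_pos p.natDegree with h₀ | hpos
  · simp [nextCoeff, h₀]
  obtain ⟨d, hd⟩ := Nat.exists_eq_succ_of_ne_zero hpos.ne'
  have hdeg : (hasseDeriv d p).natDegree < 2 := by
    have := natDegree_hasseDeriv_le p d
    omega
  have hlead : p.coeff (1 + d) = 1 := by
    rw [add_comm, ← Nat.succ_eq_add_one, ← hd]
    exact hp
  simp only [nextCoeff, natDegree_taylor, hd, Nat.succ_ne_zero, if_false, Nat.succ_sub_one]
  rw [taylor_coeff, eval_eq_sum_range' hdeg, Finset.sum_range_succ, Finset.sum_range_one,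
    hasseDeriv_coeff, hasseDeriv_coeff, hlead, zero_add, Nat.choose_self, add_comm 1 d,
    Nat.choose_succ_self_right]
  simp

theorem exists_nextCoeff_taylor_eq_zero (hf : f.Monic) : ∃ s, (taylor s f).nextCoeff = 0 := by
  refine ⟨-f.nextCoeff / f.natDegree, ?_⟩
  rw [nextCoeff_taylor_of_monic hf]
  rcases eq_or_ne f.natDegree 0 with h₀ | h₀
  · simp [nextCoeff, h₀]
  · rw [mul_div_cancel₀ _ (Nat.cast_ne_zero.2 h₀), add_neg_cancel]

/-- Only a power of `X - r` has a single root, and its next coefficient vanishes only for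
`r = 0`. -/
theorem exists_isCoprime_mul_of_nextCoeff_eq_zero {k : Type*} [Field k] [CharZero k] {p : k[X]}
    (hp : p.Monic) (hnext : p.nextCoeff = 0) (hX : p ≠ X ^ p.natDegree) {r : k}
    (hr : p.eval r = 0) :
    ∃ q₁ q₂ : k[X], q₁.Monic ∧ q₂.Monic ∧ IsCoprime q₁ q₂ ∧ p = q₁ * q₂ ∧
      q₁.natDegree < p.natDegree ∧ q₂.natDegree < p.natDegree := by
  obtain ⟨q, hpq, hq⟩ := exists_eq_pow_rootMultiplicity_mul_and_not_dvd p hp.ne_zero r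
  set m := rootMultiplicity r p
  have hm : 0 < m := (rootMultiplicity_pos hp.ne_zero).2 hr
  have hpow : ((X - C r) ^ m).Monic := (monic_X_sub_C r).pow m
  have hqm : q.Monic := hpow.of_mul_monic_left (hpq ▸ hp)
  have hpow_deg : ((X - C r) ^ m).natDegree = m := by
    rw [natDegree_pow, natDegree_X_sub_C, mul_one]
  have hdeg : p.natDegree = m + q.natDegree := by
    rw [hpq, hpow.natDegree_mul hqm, hpow_deg]
  have hq_deg : q.natDegree ≠ 0 := by
    intro h₀
    rw [hqm.natDegree_eq_zero.1 h₀, mul_one] at hpq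
    have hr₀ : r = 0 := by
      rw [hpq, (monic_X_sub_C r).nextCoeff_pow, nextCoeff_X_sub_C, smul_neg, neg_eq_zero,
        smul_eq_zero] at hnext
      exact hnext.resolve_left hm.ne'
    exact hX (by rw [hdeg, h₀, add_zero, hpq, hr₀, C_0, sub_zero])
  exact ⟨(X - C r) ^ m, q, hpow, hqm,
    ((irreducible_X_sub_C r).coprime_iff_not_dvd.2 hq).pow_left, hpq, by omega, by omega⟩

end IVT

section Reduction

/-- `F₀` is the reduction of the monic polynomial `F` with bounded Puiseux coefficients: its
coefficients are the residues of those of `F`. -/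
structure IsReduction (F : PuiseuxField[X]) (F₀ : ℝ[X]) : Prop where
  monic : F.Monic
  monic_reduction : F₀.Monic
  natDegree_eq : F.natDegree = F₀.natDegree
  hasResidue (i : ℕ) : HasResidue (F.coeff i) (F₀.coeff i)

theorem isReduction_monicOf {d : ℕ} {a : Fin d → PuiseuxField} {c : Fin d → ℝ}
    (hac : ∀ i, HasResidue (a i) (c i)) : IsReduction (monicOf a) (monicOf c) where
  monic := monic_monicOf a
  monic_reduction := monic_monicOf c
  natDegree_eq := by rw [natDegree_monicOf, natDegree_monicOf]
  hasResidue i := by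
    rcases lt_trichotomy i d with hi | rfl | hi
    · simpa only [coeff_monicOf _ ⟨i, hi⟩] using hac ⟨i, hi⟩
    · have hlead {R : Type} [CommRing R] [Nontrivial R] (u : Fin i → R) :
          (monicOf u).coeff i = 1 := by
        simpa only [natDegree_monicOf] using (monic_monicOf u).coeff_natDegree
      rw [hlead, hlead]
      exact hasResidue_one
    · rw [coeff_eq_zero_of_natDegree_lt (by rwa [natDegree_monicOf]),
        coeff_eq_zero_of_natDegree_lt (by rwa [natDegree_monicOf])]
      exact hasResidue_zero

variable {F : PuiseuxField[X]} {F₀ : ℝ[X]}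

theorem puiseuxGerm_monicOf_eq_mul (N : ℕ+) {r s : ℕ} {a : Fin (r + s) → ℝ → ℝ}
    {u : Fin r → ℝ → ℝ} {v : Fin s → ℝ → ℝ}
    (h : ∀ᶠ t in 𝓝[>] 0, monicOf (fun i => a i t) =
      monicOf (fun i => u i t) * monicOf (fun i => v i t)) :
    monicOf (fun i => puiseuxGerm N (a i)) =
      monicOf (fun i => puiseuxGerm N (u i)) * monicOf (fun i => puiseuxGerm N (v i)) := by
  have hmap {d : ℕ} (w : Fin d → ℝ → ℝ) :
      monicOf (fun i => puiseuxGerm N (w i)) = (monicOf w).map (puiseuxGerm N) :=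
    (map_monicOf _ w).symm
  rw [hmap, hmap, hmap, ← Polynomial.map_mul]
  ext i
  rw [coeff_map, coeff_map]
  refine puiseuxGerm_congr N (h.mono fun t ht => ?_)
  have heval (p : (ℝ → ℝ)[X]) : p.coeff i t = (p.map (Pi.evalRingHom (fun _ => ℝ) t)).coeff i := by
    rw [coeff_map]
    rfl
  rw [heval, heval, Polynomial.map_mul, map_monicOf, map_monicOf, map_monicOf]
  exact congrArg (fun p => p.coeff i) ht

theorem IsReduction.exists_eq_mul {p q : ℝ[X]} (hF : IsReduction F (p * q)) (hp : p.Monic)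
    (hq : q.Monic) (hpq : IsCoprime p q) :
    ∃ P Q : PuiseuxField[X], P.Monic ∧ Q.Monic ∧ P.natDegree = p.natDegree ∧
      Q.natDegree = q.natDegree ∧ F = P * Q := by
  obtain ⟨r, hr⟩ : ∃ r, p.natDegree = r := ⟨_, rfl⟩
  obtain ⟨s, hs⟩ : ∃ s, q.natDegree = s := ⟨_, rfl⟩
  have hd₀ : (p * q).natDegree = r + s := by rw [hp.natDegree_mul hq, hr, hs]
  have hd : F.natDegree = r + s := hF.natDegree_eq.trans hd₀
  obtain ⟨N, g, hg⟩ := exists_analyticAt_puiseuxGerm_eq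
    (fun i : Fin (r + s) => hF.hasResidue i)
  choose hg hg₀ hgF using hg
  rw [← monicOf_coeff hp hr, ← monicOf_coeff hq hs] at hpq
  obtain ⟨u, v, hu, hv, huv⟩ := exists_analyticAt_monicOf_eq_mul hpq
    (γ := fun t i => g i t) (analyticAt_pi_iff.2 hg) (by
      simp only [hg₀]
      rw [monicOf_coeff (hp.mul hq) hd₀, monicOf_coeff hp hr, monicOf_coeff hq hs])
  let P : Fin r → PuiseuxField := fun i =>
    ⟨puiseuxGerm N fun t => u t i, puiseuxGerm_mem N (analyticAt_pi_iff.1 hu i).meromorphicAt⟩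
  let Q : Fin s → PuiseuxField := fun i =>
    ⟨puiseuxGerm N fun t => v t i, puiseuxGerm_mem N (analyticAt_pi_iff.1 hv i).meromorphicAt⟩
  refine ⟨monicOf P, monicOf Q, monic_monicOf P, monic_monicOf Q,
    (natDegree_monicOf P).trans hr.symm, (natDegree_monicOf Q).trans hs.symm,
    map_injective _ PuiseuxField.subtype.injective ?_⟩
  rw [← monicOf_coeff hF.monic hd, Polynomial.map_mul, map_monicOf, map_monicOf, map_monicOf]
  have hFg : (PuiseuxField.subtype ∘ fun j : Fin (r + s) => F.coeff j) =
      fun j => puiseuxGerm N (g j) := funext fun j => (hgF j).symm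
  rw [hFg]
  exact puiseuxGerm_monicOf_eq_mul N (huv.filter_mono nhdsWithin_le_nhds)

theorem IsReduction.eval_pos (hF : IsReduction F F₀) (hroot : ∀ r, F₀.eval r ≠ 0)
    (x : PuiseuxField) : 0 < F.eval x := by
  have hlead : 0 < F₀.leadingCoeff := hF.monic_reduction.leadingCoeff ▸ one_pos
  rcases exists_hasResidue_or_hasResidue_inv x with ⟨r, hr⟩ | ⟨hx, hinv⟩
  · exact (HasResidue.eval hF.hasResidue hr).pos (eval_pos_of_forall_eval_ne_zero hlead hroot r)
  · have hreverse : HasResidue (F.reverse.eval x⁻¹) (F₀.reverse.eval 0) :=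
      HasResidue.eval (fun i => by
        rw [coeff_reverse, coeff_reverse, hF.natDegree_eq]
        exact hF.hasResidue _) hinv
    rw [← coeff_zero_eq_eval_zero, coeff_zero_reverse] at hreverse
    let _ := invertibleOfNonzero hx
    have heval : F.reverse.eval x⁻¹ * x ^ F.natDegree = F.eval x := by
      simpa only [eval₂_id, invOf_eq_inv] using
        eval₂_reverse_mul_pow (RingHom.id PuiseuxField) x F
    rw [← heval, hF.natDegree_eq]
    exact mul_pos (hreverse.pos hlead)
      ((even_natDegree_of_forall_eval_ne_zero hlead hroot).pow_pos hx)

theorem IsReduction.hasIVT (hF : IsReduction F F₀) (hnext : F₀.nextCoeff = 0)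
    (hX : F₀ ≠ X ^ F₀.natDegree)
    (ih : ∀ G : PuiseuxField[X], G.Monic → G.natDegree < F.natDegree → HasIVT G) : HasIVT F := by
  by_cases hroot : ∃ r, F₀.eval r = 0
  · obtain ⟨r, hr⟩ := hroot
    obtain ⟨p, q, hp, hq, hpq, rfl, hpd, hqd⟩ :=
      exists_isCoprime_mul_of_nextCoeff_eq_zero hF.monic_reduction hnext hX hr
    obtain ⟨P, Q, hP, hQ, hPd, hQd, rfl⟩ := hF.exists_eq_mul hp hq hpq
    rw [hF.natDegree_eq] at ih
    exact (ih P hP (hPd ▸ hpd)).mul (ih Q hQ (hQd ▸ hqd))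
  · exact .of_forall_eval_pos (hF.eval_pos (not_exists.1 hroot))

end Reduction

section Newton

/-- The Newton polygon: `σ` is the inverse of a Puiseux monomial whose exponent is the smallest of
the slopes `ord (a i) / (d - i)`. -/
theorem exists_pos_forall_hasResidue_mul_pow {d : ℕ} {a : Fin d → PuiseuxField} (ha : a ≠ 0) :
    ∃ σ > 0, ∃ c : Fin d → ℝ, c ≠ 0 ∧
      ∀ i, HasResidue (a i * σ ^ (d - i)) (c i) ∧ (a i = 0 → c i = 0) := by
  choose q u r hu hr hau using fun i => exists_eq_puiseuxMonomial_mul (a i)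
  have hS : (Finset.univ.filter fun i => a i ≠ 0).Nonempty := by
    obtain ⟨i, hi⟩ := Function.ne_iff.1 ha
    exact ⟨i, by simpa using hi⟩
  obtain ⟨i₀, hi₀, hmin⟩ := Finset.exists_min_image _ (fun i => q i / ((d - i : ℕ) : ℚ)) hS
  set ν := q i₀ / ((d - i₀ : ℕ) : ℚ)
  have hpos (i : Fin d) : (0 : ℚ) < (d - i : ℕ) := Nat.cast_pos.2 (Nat.sub_pos_of_lt i.2)
  have hscale (i : Fin d) : a i * puiseuxMonomial (-ν) ^ (d - i : ℕ) =
      puiseuxMonomial (q i - (d - i : ℕ) * ν) * u i := by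
    rw [puiseuxMonomial_pow, mul_neg, sub_eq_add_neg, puiseuxMonomial_add, mul_right_comm, ← hau]
  refine ⟨puiseuxMonomial (-ν), puiseuxMonomial_pos _,
    fun i => if a i = 0 then 0 else if q i - (d - i : ℕ) * ν = 0 then r i else 0, ?_, fun i => ?_⟩
  · have hi₀' : a i₀ ≠ 0 := (Finset.mem_filter.1 hi₀).2
    refine Function.ne_iff.2 ⟨i₀, ?_⟩
    rw [if_neg hi₀', if_pos (by rw [mul_div_cancel₀ _ (hpos i₀).ne', sub_self])]
    exact mt (hr i₀) hi₀'
  · refine ⟨?_, fun hi => if_pos hi⟩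
    dsimp only
    split_ifs with hi hν
    · rw [hi, zero_mul]
      exact hasResidue_zero
    all_goals
      have hexp : 0 ≤ q i - (d - i : ℕ) * ν := by
        have := hmin i (Finset.mem_filter.2 ⟨Finset.mem_univ i, hi⟩)
        rwa [le_div_iff₀ (hpos i), mul_comm, ← sub_nonneg] at this
      rw [hscale]
      simpa only [hν, if_true, if_false] using (hu i).puiseuxMonomial_mul hexp

theorem scaleRoots_eq_monicOf {R : Type*} [CommRing R] [NoZeroDivisors R] [Nontrivial R]
    {p : R[X]} {d : ℕ} (hp : p.Monic) (hd : p.natDegree = d) (s : R) :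
    scaleRoots p s = monicOf fun i : Fin d => p.coeff i * s ^ (d - i : ℕ) := by
  rw [← monicOf_coeff ((monic_scaleRoots_iff s).2 hp) ((natDegree_scaleRoots p s).trans hd)]
  simp only [coeff_scaleRoots, hd]

theorem exists_isReduction_scaleRoots {f : PuiseuxField[X]} (hf : f.Monic)
    (hnext : f.nextCoeff = 0) (hX : f ≠ X ^ f.natDegree) :
    ∃ σ > 0, ∃ F₀ : ℝ[X],
      IsReduction (scaleRoots f σ) F₀ ∧ F₀.nextCoeff = 0 ∧ F₀ ≠ X ^ F₀.natDegree := by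
  obtain ⟨d, hd⟩ : ∃ d, f.natDegree = d := ⟨_, rfl⟩
  have hcoeff : (fun i : Fin d => f.coeff i) ≠ 0 := by
    intro h₀
    refine hX ?_
    rw [← monicOf_coeff hf hd, h₀, natDegree_monicOf, monicOf, ofVec_eq_zero.2 rfl, add_zero]
  obtain ⟨σ, hσ, c, hc, hred⟩ := exists_pos_forall_hasResidue_mul_pow hcoeff
  refine ⟨σ, hσ, monicOf c, ?_, ?_, fun h => hc ?_⟩
  · rw [scaleRoots_eq_monicOf hf hd]
    exact isReduction_monicOf fun i => (hred i).1
  · cases d with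
    | zero => rw [nextCoeff, if_pos (natDegree_monicOf c)]
    | succ e =>
      rw [nextCoeff, hd, if_neg e.succ_ne_zero] at hnext
      rw [nextCoeff, natDegree_monicOf, if_neg e.succ_ne_zero]
      exact (coeff_monicOf c (Fin.last e)).trans ((hred (Fin.last e)).2 hnext)
  · rwa [natDegree_monicOf, monicOf, add_eq_left, ofVec_eq_zero] at h

theorem hasIVT_of_monic {f : PuiseuxField[X]} (hf : f.Monic) : HasIVT f := by
  induction h : f.natDegree using Nat.strong_induction_on generalizing f with
  | _ d ih =>
    obtain ⟨s, hs⟩ := exists_nextCoeff_taylor_eq_zero hf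
    refine HasIVT.of_taylor (s := s) ?_
    by_cases hX : taylor s f = X ^ (taylor s f).natDegree
    · exact hX ▸ hasIVT_X_pow _
    obtain ⟨σ, hσ, F₀, hred, hnext, hX₀⟩ :=
      exists_isReduction_scaleRoots ((leadingCoeff_taylor s f).trans hf) hs hX
    refine HasIVT.of_scaleRoots hσ (hred.hasIVT hnext hX₀ fun G hG hdeg => ?_)
    rw [natDegree_scaleRoots, natDegree_taylor, h] at hdeg
    exact ih _ hdeg hG rfl

instance : PolynomialIVT PuiseuxField where
  hasIVT p := by
    rcases eq_or_ne p 0 with rfl | hp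
    · exact fun a b _ h => absurd h (by simp)
    intro a b hab h
    have hlead : p.leadingCoeff⁻¹ ≠ 0 := inv_ne_zero (leadingCoeff_ne_zero.2 hp)
    obtain ⟨c, hc, hroot⟩ := hasIVT_of_monic (monic_mul_leadingCoeff_inv hp) hab (by
      simp only [eval_mul, eval_C]
      rw [mul_mul_mul_comm]
      exact mul_neg_of_neg_of_pos h (mul_self_pos.2 hlead))
    rw [eval_mul, eval_C] at hroot
    exact ⟨c, hc, (mul_eq_zero.1 hroot).resolve_right hlead⟩

end Newton

end NewtonPuiseux

section LimitTest

theorem hasBasis_atTop_one_lt_mul {K : Type*} [Field K] [LinearOrder K] [IsStrictOrderedRing K] :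
    (atTop : Filter K).HasBasis (0 < ·) fun s => {y | 1 < s * y} := by
  refine (atTop_basis_Ioi' (0 : K)).to_hasBasis (fun a ha => ?_) fun s hs => ?_
  · exact ⟨a⁻¹, inv_pos.2 ha, fun y hy => (one_lt_inv_mul₀ ha).1 hy⟩
  · exact ⟨s⁻¹, inv_pos.2 hs, fun y hy => (inv_lt_iff_one_lt_mul₀' hs).1 hy⟩

theorem comap_coe_nhds_top : comap ((↑) : ℝ → EReal) (𝓝 ⊤) = atTop :=
  le_antisymm (EReal.tendsto_coe_nhds_top_iff.1 tendsto_comap) EReal.tendsto_coe_atTop.le_comap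

theorem comap_coe_nhds_bot : comap ((↑) : ℝ → EReal) (𝓝 ⊥) = atBot :=
  le_antisymm (EReal.tendsto_coe_nhds_bot_iff.1 tendsto_comap) EReal.tendsto_coe_atBot.le_comap

theorem exists_hasBasis_evalEval_pos (c : EReal) :
    ∃ Q : ℝ[X][X],
      (comap ((↑) : ℝ → EReal) (𝓝 c)).HasBasis (0 < ·) (fun s => {y | 0 < Q.evalEval s y}) ∧
      ∀ ⦃s t y⦄, 0 < s → s ≤ t → 0 < Q.evalEval s y → 0 < Q.evalEval t y := by
  induction c with
  | top =>
    refine ⟨C X * X - 1, ?_⟩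
    simp only [evalEval_sub, evalEval_mul, evalEval_C, evalEval_X, evalEval_one, eval_X, sub_pos]
    rw [comap_coe_nhds_top]
    exact ⟨hasBasis_atTop_one_lt_mul, fun s t y hs hst h => h.trans_le
      (mul_le_mul_of_nonneg_right hst (pos_of_mul_pos_right (one_pos.trans h) hs.le).le)⟩
  | bot =>
    refine ⟨C X * (-X : ℝ[X][X]) - 1, ?_⟩
    simp only [evalEval_sub, evalEval_mul, evalEval_C, evalEval_X, evalEval_one, eval_X,
      evalEval_neg, sub_pos]
    rw [comap_coe_nhds_bot, ← comap_neg_atTop]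
    exact ⟨hasBasis_atTop_one_lt_mul.comap _, fun s t y hs hst h => h.trans_le
      (mul_le_mul_of_nonneg_right hst (pos_of_mul_pos_right (one_pos.trans h) hs.le).le)⟩
  | coe c =>
    refine ⟨C X ^ 2 - (X - C (C c)) ^ 2, ?_⟩
    simp only [evalEval_sub, evalEval_pow, evalEval_C, evalEval_X, eval_X, eval_C, sub_pos]
    rw [← EReal.isEmbedding_coe.nhds_eq_comap]
    refine ⟨Metric.nhds_basis_ball.congr (fun _ => Iff.rfl) fun s hs => ?_, fun s t y hs hst h =>
      h.trans_le (pow_le_pow_left₀ hs.le hst 2)⟩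
    ext y
    rw [Metric.mem_ball, Real.dist_eq, Set.mem_ofPred_eq, sq_lt_sq, abs_of_pos hs]

end LimitTest

section Selection

variable {n : ℕ}

/-- Specialization of a polynomial over `ℝ[X]` at the parameter value `s` and the point `x`. -/
def paramEval (s : ℝ) (x : Fin n → ℝ) : MvPolynomial (Fin n) ℝ[X] →+* ℝ :=
  MvPolynomial.eval₂Hom (evalRingHom s) x

theorem paramEval_map_C (s : ℝ) (x : Fin n → ℝ) (p : MvPolynomial (Fin n) ℝ) :
    paramEval s x (MvPolynomial.map C p) = MvPolynomial.eval x p := by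
  rw [paramEval, MvPolynomial.coe_eval₂Hom, MvPolynomial.eval₂_map, MvPolynomial.eval]
  congr 2
  ext c
  simp

theorem paramEval_aeval_map_C (s : ℝ) (x : Fin n → ℝ) (p : MvPolynomial (Fin n) ℝ)
    (Q : ℝ[X][X]) :
    paramEval s x (aeval (MvPolynomial.map C p) Q) = Q.evalEval s (MvPolynomial.eval x p) := by
  rw [aeval_def, hom_eval₂, paramEval_map_C, ← eval₂_evalRingHom]
  congr 1
  ext <;> simp [paramEval]

/-- A real polynomial in `s`, as the germ of a function of `s` at `0⁺`. -/
def polynomialGerm : ℝ[X] →+* PuiseuxField :=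
  ((puiseuxGerm 1).comp (RingHom.pi evalRingHom)).codRestrict PuiseuxField fun a =>
    puiseuxGerm_mem 1 (AnalyticOnNhd.eval_polynomial a 0 trivial).meromorphicAt

theorem coe_polynomialGerm (N : ℕ+) (a : ℝ[X]) :
    (polynomialGerm a : RightGerm) = puiseuxGerm N fun τ => a.eval (τ ^ (N : ℕ)) := by
  have h := puiseuxGerm_mul_comp_pow 1 N fun s => a.eval s
  rw [one_mul] at h
  exact h.symm

variable {ξ : ℝ → Fin n → ℝ}

theorem meromorphicAt_paramEval (hξ : ∀ i, MeromorphicAt (fun τ => ξ τ i) 0) (N : ℕ)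
    (p : MvPolynomial (Fin n) ℝ[X]) :
    MeromorphicAt (fun τ => paramEval (τ ^ N) (ξ τ) p) 0 := by
  simp only [paramEval, MvPolynomial.coe_eval₂Hom, MvPolynomial.eval₂_eq', coe_evalRingHom]
  refine .fun_sum fun d _ => .fun_mul ?_ (.fun_prod fun i _ => (hξ i).fun_pow _)
  exact (AnalyticOnNhd.eval_polynomial _ _ trivial).fun_comp (by fun_prop) |>.meromorphicAt

theorem coe_eval₂_polynomialGerm {N : ℕ+} {x : Fin n → PuiseuxField}
    (hx : ∀ i, puiseuxGerm N (fun τ => ξ τ i) = x i) (p : MvPolynomial (Fin n) ℝ[X]) :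
    ((MvPolynomial.eval₂ polynomialGerm x p : PuiseuxField) : RightGerm) =
      puiseuxGerm N fun τ => paramEval (τ ^ (N : ℕ)) (ξ τ) p := by
  have hhom : PuiseuxField.subtype.comp (MvPolynomial.eval₂Hom polynomialGerm x) =
      (puiseuxGerm N).comp (RingHom.pi fun τ => paramEval (τ ^ (N : ℕ)) (ξ τ)) := by
    refine MvPolynomial.ringHom_ext (fun a => ?_) fun i => ?_
    · calc ((MvPolynomial.eval₂Hom polynomialGerm x (.C a) : PuiseuxField) : RightGerm)
        _ = polynomialGerm a := by rw [MvPolynomial.eval₂Hom_C]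
        _ = puiseuxGerm N fun τ => a.eval (τ ^ (N : ℕ)) := coe_polynomialGerm N a
        _ = puiseuxGerm N fun τ => paramEval (τ ^ (N : ℕ)) (ξ τ) (.C a) :=
          congrArg _ (funext fun τ => (MvPolynomial.eval₂Hom_C (evalRingHom _) (ξ τ) a).symm)
    · calc ((MvPolynomial.eval₂Hom polynomialGerm x (.X i) : PuiseuxField) : RightGerm)
        _ = x i := by rw [MvPolynomial.eval₂Hom_X']
        _ = puiseuxGerm N fun τ => ξ τ i := (hx i).symm
        _ = puiseuxGerm N fun τ => paramEval (τ ^ (N : ℕ)) (ξ τ) (.X i) :=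
          congrArg _ (funext fun τ => (MvPolynomial.eval₂Hom_X' _ _ _).symm)
  exact DFunLike.congr_fun hhom p

theorem eventually_forall_exists_meromorphicAt_sign_eq (F : Finset (MvPolynomial (Fin n) ℝ[X])) :
    ∀ᶠ s in 𝓝[>] 0, ∀ x, ∃ (N : ℕ+) (ξ : ℝ → Fin n → ℝ),
      (∀ i, MeromorphicAt (fun τ => ξ τ i) 0) ∧ ∀ p ∈ F, ∀ᶠ τ in 𝓝[>] 0,
        SignType.sign (paramEval (τ ^ (N : ℕ)) (ξ τ) p) = SignType.sign (paramEval s x p) := by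
  obtain ⟨G, hG⟩ := exists_finset_forall_exists_sign_eval₂_eq ℝ PuiseuxField F
  have hsign : ∀ᶠ s in 𝓝[>] 0, ∀ a ∈ G,
      SignType.sign (evalRingHom s a) = SignType.sign (polynomialGerm a) :=
    (eventually_all_finset G).2 fun a _ =>
      eventually_sign_eq_sign_puiseuxGerm 1
        (AnalyticOnNhd.eval_polynomial a 0 trivial).meromorphicAt
  filter_upwards [hsign] with s hs x
  obtain ⟨x₂, hx₂⟩ := hG (evalRingHom s) polynomialGerm hs x
  obtain ⟨N, h, hh⟩ := exists_meromorphicAt_puiseuxGerm_eq x₂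
  refine ⟨N, fun τ i => h i τ, fun i => (hh i).1, fun p hp => ?_⟩
  refine (eventually_sign_eq_sign_puiseuxGerm N
    (meromorphicAt_paramEval (fun i => (hh i).1) N p)).mono fun τ hτ => ?_
  rw [hτ, ← coe_eval₂_polynomialGerm fun i => (hh i).2]
  exact (hx₂ p hp).symm

end Selection

section Curve

variable {n : ℕ} {U : Set (Fin n → ℝ)}

theorem exists_finset_forall_sign_eq_imp_mem (hU : IsSemialgebraic U) :
    ∃ P : Finset (MvPolynomial (Fin n) ℝ), ∀ ⦃x y⦄, x ∈ U →
      (∀ p ∈ P, SignType.sign (MvPolynomial.eval y p) = SignType.sign (MvPolynomial.eval x p)) →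
      y ∈ U := by
  classical
  obtain ⟨m, E, Q, rfl⟩ := hU
  refine ⟨Finset.univ.biUnion fun k => E k ∪ Q k, fun x y hx hxy => ?_⟩
  obtain ⟨k, hE, hQ⟩ := Set.mem_iUnion.1 hx
  have hsign (p) (hp : p ∈ E k ∪ Q k) := hxy p (Finset.mem_biUnion.2 ⟨k, Finset.mem_univ k, hp⟩)
  refine Set.mem_iUnion.2 ⟨k, fun p hp => ?_, fun q hq => ?_⟩
  · rw [← sign_eq_zero_iff, hsign p (Finset.mem_union_left _ hp), hE p hp, sign_zero]
  · rw [← sign_eq_one_iff, hsign q (Finset.mem_union_right _ hq), sign_pos (hQ q hq)]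

theorem tendsto_pow_nhdsGT_zero (N : ℕ+) :
    Tendsto (fun τ : ℝ => τ ^ (N : ℕ)) (𝓝[>] 0) (𝓝[>] 0) := by
  refine tendsto_nhdsWithin_iff.2 ⟨?_, eventually_mem_nhdsWithin.mono fun τ (hτ : 0 < τ) =>
    Set.mem_Ioi.2 (pow_pos hτ _)⟩
  exact ((continuous_pow (N : ℕ)).tendsto' 0 0 (zero_pow N.ne_zero)).mono_left nhdsWithin_le_nhds

theorem exists_meromorphicAt_mem_tendsto (hU : IsSemialgebraic U) {ι : Type*} [Finite ι]
    (g : ι → MvPolynomial (Fin n) ℝ) (c : ι → EReal) {κ : Type*} {l : Filter κ} [l.NeBot]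
    {x : κ → Fin n → ℝ} (hx : ∀ᶠ k in l, x k ∈ U)
    (hg : ∀ j, Tendsto (fun k => ((MvPolynomial.eval (x k) (g j) : ℝ) : EReal)) l (𝓝 (c j))) :
    ∃ ξ : ℝ → Fin n → ℝ, (∀ i, MeromorphicAt (fun τ => ξ τ i) 0) ∧
      (∀ᶠ τ in 𝓝[>] 0, ξ τ ∈ U) ∧
      ∀ j, Tendsto (fun τ => ((MvPolynomial.eval (ξ τ) (g j) : ℝ) : EReal)) (𝓝[>] 0)
        (𝓝 (c j)) := by
  classical
  cases nonempty_fintype ι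
  obtain ⟨P, hP⟩ := exists_finset_forall_sign_eq_imp_mem hU
  choose Q hQ hQmono using fun j => exists_hasBasis_evalEval_pos (c j)
  obtain ⟨s, hsel, hs⟩ := ((eventually_forall_exists_meromorphicAt_sign_eq
    (P.image (MvPolynomial.map C) ∪
      Finset.univ.image fun j => aeval (MvPolynomial.map C (g j)) (Q j))).and
    eventually_mem_nhdsWithin).exists
  have hclose (j : ι) : ∀ᶠ k in l, 0 < (Q j).evalEval s (MvPolynomial.eval (x k) (g j)) :=
    (hQ j).tendsto_right_iff.1 (tendsto_comap_iff.2 (hg j)) s hs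
  obtain ⟨k, hkU, hk⟩ := (hx.and (eventually_all.2 hclose)).exists
  obtain ⟨N, ξ, hξ, hsign⟩ := hsel (x k)
  simp only [Finset.forall_mem_union, Finset.forall_mem_image, paramEval_map_C,
    paramEval_aeval_map_C, Finset.mem_univ, forall_const] at hsign
  obtain ⟨hsignP, hsignQ⟩ := hsign
  refine ⟨ξ, hξ, ?_, fun j =>
    (tendsto_comap_iff (g := Real.toEReal)).1 ((hQ j).tendsto_right_iff.2 fun t ht => ?_)⟩
  · exact ((eventually_all_finset P).2 hsignP).mono fun τ hτ => hP hkU hτ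
  · filter_upwards [@hsignQ j, tendsto_pow_nhdsGT_zero N (Ioc_mem_nhdsGT ht)] with τ hτ hmem
    rw [sign_pos (hk j), sign_eq_one_iff] at hτ
    exact hQmono j hmem.1 hmem.2 hτ

end Curve

section Pole

theorem meromorphicAt_pi {𝕜 ι : Type*} [NontriviallyNormedField 𝕜] [Fintype ι] {f : 𝕜 → ι → 𝕜}
    {z : 𝕜} (hf : ∀ i, MeromorphicAt (fun t => f t i) z) : MeromorphicAt f z := by
  classical
  have hsum : f = fun t => ∑ i, f t i • (Pi.single i 1 : ι → 𝕜) :=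
    funext fun t => pi_eq_sum_univ' (f t)
  rw [hsum]
  exact .fun_sum fun i _ => (hf i).fun_smul (.const _ z)

theorem exists_eq_zpow_smul_of_forall_not_tendsto_nhds {E : Type*} [NormedAddCommGroup E]
    [NormedSpace ℝ E] {ξ : ℝ → E} (hξ : MeromorphicAt ξ 0)
    (hlim : ∀ v, ¬ Tendsto ξ (𝓝[>] 0) (𝓝 v)) :
    ∃ α < (0 : ℤ), ∃ y : ℝ → E, AnalyticAt ℝ y 0 ∧ y 0 ≠ 0 ∧
      ∀ᶠ τ in 𝓝[>] 0, ξ τ = τ ^ α • y τ := by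
  have horder : meromorphicOrderAt ξ 0 < 0 := by
    by_contra! hnonneg
    obtain ⟨v, hv⟩ := tendsto_nhds_of_meromorphicOrderAt_nonneg hξ hnonneg
    exact hlim v (hv.mono_left (nhdsGT_le_nhdsNE 0))
  obtain ⟨y, hy, hy₀, hξy⟩ := (meromorphicOrderAt_ne_top_iff hξ).1 horder.ne_top
  have hneg : (meromorphicOrderAt ξ 0).untop₀ < 0 := by
    rwa [← WithTop.coe_lt_coe, WithTop.coe_untop₀_of_ne_top horder.ne_top]
  refine ⟨_, hneg, y, hy, hy₀, ?_⟩
  simpa only [sub_zero, EventuallyEq] using hξy.filter_mono (nhdsGT_le_nhdsNE 0)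

theorem exists_forall_mem_Ioo_of_eventually {p q : ℝ → Prop} (hp : ∀ᶠ t in 𝓝 0, p t)
    (hq : ∀ᶠ t in 𝓝[>] 0, q t) :
    ∃ ε > 0, (∀ t ∈ Set.Ioo (-ε) ε, p t) ∧ ∀ t ∈ Set.Ioo 0 ε, q t := by
  obtain ⟨δ, hδ, hpδ⟩ := Metric.eventually_nhds_iff_ball.1 hp
  obtain ⟨η, hη, hqη⟩ := mem_nhdsGT_iff_exists_Ioo_subset.1 hq
  refine ⟨min δ η, lt_min hδ hη, fun t ht => hpδ t ?_, fun t ht =>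
    hqη ⟨ht.1, ht.2.trans_le (min_le_right δ η)⟩⟩
  rw [mem_ball_zero_iff, Real.norm_eq_abs]
  exact (abs_lt.2 ht).trans_le (min_le_left δ η)

theorem tendsto_sum_sq_atTop {ι : Type*} [Fintype ι] :
    Tendsto (fun x : ι → ℝ => ∑ i, x i ^ 2) (comap norm atTop) atTop := by
  refine tendsto_atTop_mono (fun x => ?_) (tendsto_atTop_add_const_right _ (-1) tendsto_comap)
  rw [← sub_eq_add_neg, sub_le_iff_le_add,
    pi_norm_le_iff_of_nonneg (add_nonneg (Finset.sum_nonneg fun i _ => sq_nonneg (x i)) one_pos.le)]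
  intro i
  have hi : x i ^ 2 ≤ ∑ i, x i ^ 2 :=
    Finset.single_le_sum (f := fun i => x i ^ 2) (fun i _ => sq_nonneg _) (Finset.mem_univ i)
  rw [Real.norm_eq_abs]
  nlinarith [sq_abs (x i), sq_nonneg (|x i| - 1)]

end Pole

end CurveSelection

/-- Curve Selection Lemma at infinity. -/
theorem curve_selection_at_infinity {n : ℕ} (U : Set (Fin n → ℝ)) (hU : IsSemialgebraic U)
    (g : MvPolynomial (Fin n) ℝ) (c : EReal) (x : ℕ → (Fin n → ℝ)) (hx : ∀ k, x k ∈ U)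
    (hnorm : Filter.Tendsto (fun k => ‖x k‖) Filter.atTop Filter.atTop)
    (hg : Filter.Tendsto (fun k => ((MvPolynomial.eval (x k) g : ℝ) : EReal))
      Filter.atTop (nhds c)) :
    ∃ (α : ℤ) (ε : ℝ) (y : ℝ → (Fin n → ℝ)),
      α < 0 ∧ 0 < ε ∧
      (∀ t ∈ Set.Ioo (-ε) ε, AnalyticAt ℝ y t) ∧
      y 0 ≠ 0 ∧
      (∀ t ∈ Set.Ioo (0 : ℝ) ε, (t ^ α) • y t ∈ U) ∧
      Filter.Tendsto (fun t : ℝ => ((MvPolynomial.eval ((t ^ α) • y t) g : ℝ) : EReal))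
        (nhdsWithin 0 (Set.Ioi 0)) (nhds c) := by
  have hsq : Tendsto (fun k => ((MvPolynomial.eval (x k) (∑ i, .X i ^ 2) : ℝ) : EReal)) atTop
      (𝓝 ⊤) := by
    simpa [EReal.tendsto_coe_nhds_top_iff, Function.comp_def] using
      CurveSelection.tendsto_sum_sq_atTop.comp (tendsto_comap_iff.2 hnorm)
  have hpair : ∀ j, Tendsto (fun k => ((MvPolynomial.eval (x k) (![g, ∑ i, .X i ^ 2] j) : ℝ) :
      EReal)) atTop (𝓝 (![c, ⊤] j)) := Fin.forall_fin_two.2 ⟨hg, hsq⟩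
  obtain ⟨ξ, hξ, hξU, hlim⟩ :=
    CurveSelection.exists_meromorphicAt_mem_tendsto hU _ _ (.of_forall hx) hpair
  obtain ⟨α, hα, y, hy, hy₀, hξy⟩ :=
    CurveSelection.exists_eq_zpow_smul_of_forall_not_tendsto_nhds
      (CurveSelection.meromorphicAt_pi hξ) fun v hv => not_tendsto_nhds_of_tendsto_atTop
        (EReal.tendsto_coe_nhds_top_iff.1 (hlim 1)) _
        (((MvPolynomial.continuous_eval _).tendsto v).comp hv)
  obtain ⟨ε, hε, hyε, hUε⟩ := CurveSelection.exists_forall_mem_Ioo_of_eventually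
    hy.eventually_analyticAt (hξU.and hξy)
  refine ⟨α, ε, y, hα, hε, hyε, hy₀, fun t ht => (hUε t ht).2 ▸ (hUε t ht).1, ?_⟩
  exact (hlim 0).congr' (hξy.mono fun t ht => by rw [ht]; rfl)
end
end

section
/- For every mixed polynomial f : ℂⁿ → ℂ, the set S(f) of asymptotic ρ-nonregular values is a closed subset of ℂ. -/
open Complex Filter Finset

noncomputable section

/-!
`S(f)` is the set of cluster points of `f` along the filter generated on `M(f)` by the sets
`{‖z‖ ≥ R}`: this filter is countably generated and `ℂ` is first countable, so sequences detect
its cluster points. The cluster points of a map along a filter always form a closed set.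
-/

section ClusterPoints

variable {α X : Type*} [TopologicalSpace X] [FirstCountableTopology X]

theorem mapClusterPt_iff_exists_seq_tendsto {F : Filter α} [F.IsCountablyGenerated] {x : X}
    {u : α → X} :
    MapClusterPt x F u ↔
      ∃ z : ℕ → α, Tendsto z atTop F ∧ Tendsto (u ∘ z) atTop (nhds x) where
  mp h :=
    let ⟨z, hu, hz⟩ := h.exists_seq_tendsto
    ⟨z, hz, hu⟩
  mpr := fun ⟨_, hz, hu⟩ ↦ .of_comp hz hu.mapClusterPt

theorem mapClusterPt_comap_coe_iff_exists_seq_mem_tendsto {F : Filter α} [F.IsCountablyGenerated]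
    {M : Set α} {f : α → X} {x : X} :
    MapClusterPt x (comap (↑) F) (fun z : M ↦ f z) ↔
      ∃ z : ℕ → α, (∀ k, z k ∈ M) ∧ Tendsto z atTop F ∧
        Tendsto (fun k ↦ f (z k)) atTop (nhds x) := by
  rw [mapClusterPt_iff_exists_seq_tendsto]
  constructor
  · rintro ⟨z, hz, hf⟩
    exact ⟨fun k ↦ z k, fun k ↦ (z k).2, tendsto_comap_iff.1 hz, hf⟩
  · rintro ⟨z, hM, hz, hf⟩
    exact ⟨fun k ↦ ⟨z k, hM k⟩, tendsto_comap_iff.2 hz, hf⟩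

theorem Sset_isClosed_general (F : Filter α) [F.IsCountablyGenerated] (M : Set α) (f : α → X) :
    IsClosed {v | ∃ z : ℕ → α, (∀ k, z k ∈ M) ∧ Tendsto z atTop F ∧
      Tendsto (fun k ↦ f (z k)) atTop (nhds v)} := by
  simp only [← mapClusterPt_comap_coe_iff_exists_seq_mem_tendsto]
  exact isClosed_setOfPred_clusterPt

end ClusterPoints

/-- `S(f)` is closed. -/
theorem Sset_isClosed {n : ℕ} (c : MixedCoeff n) : IsClosed (Mixed.Sset c) := by
  simpa only [Mixed.Sset, tendsto_comap_iff, Function.comp_def] using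
    Sset_isClosed_general (comap norm atTop) (Mixed.Milnor c) (Mixed.eval c)
end
end
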